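/- Let X = A_7 be embedded in Y = D_{35} = SO_{70} via the 70-dimensional irreducible representation of highest weight δ = ω_4, and let V = V_Y(λ_{35}) be a half-spin module for Y (of dimension 2^{34}). Then V↓X is multiplicity-free; more precisely, V↓X is the direct sum of exactly 36 pairwise non-isomorphic irreducible X-modules; in particular the sum of the dimensions of these 36 irreducibles equals 2^{34}. -/

import Mathlib

/-!
# Common framework

Over an algebraically closed field of characteristic zero, finite–dimensional rational
representations of a simple algebraic group are semisimple and are determined by their
formal characters, i.e. by elements of the group ring of the (rational) weight lattice;
the character of the irreducible module of highest weight `λ` is pinned down by the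
Weyl character formula `A_ρ · χ_λ = A_{λ+ρ}`.

Below we model, completely combinatorially:

* type `A_r` : weights are realised by their traceless representatives in `Fin (r+1) → ℚ`
  (the `gl`-coordinates), and the Weyl group is the symmetric group;
* types `B_n, C_n, D_n` : weights are realised in the standard `ε`-coordinates
  `Fin n → ℚ`, and the Weyl group consists of (signed) permutations, with evenly many
  sign changes in type `D`;
* an embedding `X = A_r < Y` (classical of type `t` and rank `n`) in which `X` acts on
  the natural module `W` of `Y` irreducibly with highest weight `δ` : the weights of `W`
  are `± w i` (plus one zero weight in type `B`), and restriction of characters is induced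
  by the map `v ↦ ∑ i, v i • w i` of weight lattices;
* `IsMFRes t n r δ lam` : the restriction to `X` of the irreducible `Y`-module with
  highest weight `lam` is multiplicity-free, i.e. its character is a sum of distinct
  irreducible characters of `X`.

Dominant weights are always recorded by their (natural number) coordinates in the basis
of fundamental weights, `e n k` being the `k`-th fundamental weight (1-indexed).
-/

noncomputable section

namespace MFPaper

/-- The Dynkin type of a classical group `B_n = SO_{2n+1}`, `C_n = Sp_{2n}`, `D_n = SO_{2n}`. -/
inductive CType | B | C | D
deriving DecidableEq

/-- The character ring: the integral group ring of a rational weight space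
with `k` coordinates. -/
abbrev CharRing (k : ℕ) : Type := AddMonoidAlgebra ℤ (Fin k → ℚ)

/-- The formal exponential `e^v` of a weight `v`. -/
def mono {k : ℕ} (v : Fin k → ℚ) : CharRing k := AddMonoidAlgebra.single v 1

/-- `e n k` : the `k`-th fundamental dominant weight (`1 ≤ k ≤ n`, 1-indexed) of a rank `n`
group, recorded by its coordinates in the basis of fundamental weights. -/
def e (n k : ℕ) : Fin n → ℕ := fun i => if (i : ℕ) + 1 = k then 1 else 0

/-! ### Type `A_r` -/

/-- The partition (`gl`) lift of the dominant weight of `A_r` with coordinates `d`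
in the basis of fundamental weights. -/
def partLift (r : ℕ) (d : Fin r → ℕ) : Fin (r + 1) → ℚ := fun i =>
  ∑ j ∈ Finset.univ.filter (fun j : Fin r => (i : ℕ) ≤ (j : ℕ)), (d j : ℚ)

/-- The traceless (`sl`) representative of the dominant weight of `A_r` with coordinates `d`. -/
def slWt (r : ℕ) (d : Fin r → ℕ) : Fin (r + 1) → ℚ := fun i =>
  partLift r d i - (∑ j : Fin r, (((j : ℕ) : ℚ) + 1) * (d j : ℚ)) / (r + 1)

/-- A lift of the half-sum of the positive roots of `A_r`. -/
def rhoA (r : ℕ) : Fin (r + 1) → ℚ := fun i => (r : ℚ) - (i : ℕ)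

/-- The Weyl alternating sum `A_v = ∑_{σ} sgn(σ) e^{σ v}` for type `A_r`. -/
def altA (r : ℕ) (v : Fin (r + 1) → ℚ) : CharRing (r + 1) :=
  ∑ σ : Equiv.Perm (Fin (r + 1)),
    ((Equiv.Perm.sign σ : ℤˣ) : ℤ) • mono (fun i => v (σ i))

/-- `IsCharA r d f` : `f` is the formal character of the irreducible `A_r`-module
of highest weight `d` (Weyl character formula). -/
def IsCharA (r : ℕ) (d : Fin r → ℕ) (f : CharRing (r + 1)) : Prop :=
  altA r (rhoA r) * f = altA r (slWt r d + rhoA r)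

/-- `Decomp r F c` : the character `F` of a representation of `A_r` decomposes as
`∑_μ (c μ) · χ_μ`, i.e. the irreducible of highest weight `μ` occurs in it as a
composition factor with multiplicity `c μ`. -/
def Decomp (r : ℕ) (F : CharRing (r + 1)) (c : (Fin r → ℕ) →₀ ℕ) : Prop :=
  F * altA r (rhoA r) = c.sum fun μ k => (k : ℤ) • altA r (slWt r μ + rhoA r)

/-- The Weyl dimension formula for type `A_r`. -/
def dimA (r : ℕ) (d : Fin r → ℕ) : ℚ :=
  ∏ p ∈ Finset.univ.filter (fun p : Fin (r + 1) × Fin (r + 1) => (p.1 : ℕ) < (p.2 : ℕ)),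
    ((partLift r d p.1 - partLift r d p.2 + ((p.2 : ℕ) : ℚ) - ((p.1 : ℕ) : ℚ)) /
      (((p.2 : ℕ) : ℚ) - ((p.1 : ℕ) : ℚ)))

/-- The self-dual irreducible `A_r`-module of highest weight `d` is *symplectic*
(it carries an invariant alternating form); by Steinberg's criterion this happens
exactly when `⟨d, 2ρ^∨⟩ = ∑ d_k · k(r+1-k)` is odd. -/
def IsSympWt (r : ℕ) (d : Fin r → ℕ) : Prop :=
  Odd (∑ i : Fin r, d i * ((i : ℕ) + 1) * (r - (i : ℕ)))

/-! ### The classical types `B`, `C`, `D` -/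

/-- Convenient access to the `k`-th (0-indexed) coordinate. -/
def cval {n : ℕ} (c : Fin n → ℕ) (k : ℕ) : ℚ := if h : k < n then (c ⟨k, h⟩ : ℚ) else 0

/-- `ε`-coordinates of the dominant weight of the classical group of type `t` and rank `n`
with coordinates `c` in the basis of fundamental weights (Bourbaki numbering). -/
def epsWt (t : CType) (n : ℕ) (c : Fin n → ℕ) : Fin n → ℚ := fun i =>
  (∑ k ∈ Finset.univ.filter (fun k : Fin n => (i : ℕ) ≤ (k : ℕ)), (c k : ℚ)) -
    (match t with
      | .C => 0
      | .B => cval c (n - 1) / 2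
      | .D => (cval c (n - 2) + cval c (n - 1)) / 2)

/-- The half-sum of the positive roots in `ε`-coordinates. -/
def rhoY (t : CType) (n : ℕ) : Fin n → ℚ := fun i =>
  match t with
  | .C => (n : ℚ) - (i : ℕ)
  | .B => (n : ℚ) - (i : ℕ) - 1 / 2
  | .D => (n : ℚ) - 1 - (i : ℕ)

/-- The Weyl alternating sum for the classical group of type `t` and rank `n`:
the Weyl group consists of the signed permutations of the coordinates,
with evenly many sign changes in type `D`. -/
def altY (t : CType) (n : ℕ) (v : Fin n → ℚ) : CharRing n :=
  ∑ σ : Equiv.Perm (Fin n), ∑ s : Fin n → Bool,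
    if t = CType.D ∧ ¬ Even (Finset.univ.filter (fun i => s i = true)).card then 0
    else (((Equiv.Perm.sign σ : ℤˣ) : ℤ) *
          (-1) ^ (Finset.univ.filter (fun i => s i = true)).card) •
      mono (fun i => (if s i then -1 else 1) * v (σ i))

/-- `IsCharY t n c f` : `f` is the formal character of the irreducible module of highest
weight `c` for the classical group of type `t` and rank `n` (Weyl character formula). -/
def IsCharY (t : CType) (n : ℕ) (c : Fin n → ℕ) (f : CharRing n) : Prop :=
  altY t n (rhoY t n) * f = altY t n (epsWt t n c + rhoY t n)

/-! ### The embedding `X = A_r < Y` via `δ`, and restriction of characters -/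

/-- `WtSys t n r δ w` : `w` lists "half" of the weights of the natural module
`W = V_X(δ)` of the classical group `Y` of type `t` and rank `n`, for `X = A_r`:
the weights of `W` (with multiplicity) are exactly the `± w i`, together with one
extra zero weight in type `B`.  Such a `w` records a maximal torus embedding
`T_X → T_Y` realising the irreducible embedding `X < Y = SO(W)` or `Sp(W)` given
by the representation of highest weight `δ`. -/
def WtSys (t : CType) (n r : ℕ) (δ : Fin r → ℕ)
    (w : Fin n → (Fin (r + 1) → ℚ)) : Prop :=
  ((∑ i : Fin n, (mono (w i) + mono (-(w i)))) +
      (if t = CType.B then mono (0 : Fin (r + 1) → ℚ) else 0)) * altA r (rhoA r)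
    = altA r (slWt r δ + rhoA r)

/-- Restriction of characters from `Y` to `X = A_r` along the torus embedding
recorded by `w`. -/
def resChar {n r : ℕ} (w : Fin n → (Fin (r + 1) → ℚ)) (F : CharRing n) :
    CharRing (r + 1) :=
  AddMonoidAlgebra.mapDomain (fun v : Fin n → ℚ => ∑ i : Fin n, v i • w i) F

/-- `IsMFRes t n r δ lam` : in the embedding `X = A_r < Y` (the classical group of type
`t` and rank `n`) given by the irreducible representation of highest weight `δ`, the
restriction to `X` of the irreducible `Y`-module of highest weight `lam` is
multiplicity-free: its character is a sum of *distinct* irreducible characters of `X`. -/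
def IsMFRes (t : CType) (n r : ℕ) (δ : Fin r → ℕ) (lam : Fin n → ℕ) : Prop :=
  ∀ w, WtSys t n r δ w → ∀ f, IsCharY t n lam f →
    ∃ c : (Fin r → ℕ) →₀ ℕ, Decomp r (resChar w f) c ∧ ∀ μ, c μ ≤ 1

/-- The operation `e^v ↦ e^{k·v}` on characters (Adams operation on the torus),
used to express symmetric and exterior powers of characters. -/
def pw {m : ℕ} (k : ℕ) (F : CharRing m) : CharRing m :=
  AddMonoidAlgebra.mapDomain (fun v : Fin m → ℚ => (k : ℚ) • v) F

/-- The irreducible `A_r`-module of highest weight `d` carries a nonzero invariant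
*symmetric* bilinear form, i.e. the trivial module occurs in its symmetric square
(whose character `S` satisfies `2S = f² + f^{[2]}`). -/
def HasSymForm (r : ℕ) (d : Fin r → ℕ) : Prop :=
  ∀ f, IsCharA r d f →
    ∃ c : (Fin r → ℕ) →₀ ℕ,
      (f * f + pw 2 f) * altA r (rhoA r)
          = c.sum (fun μ k => ((2 * k : ℕ) : ℤ) • altA r (slWt r μ + rhoA r)) ∧ 1 ≤ c 0

/-- The irreducible `A_r`-module of highest weight `d` carries a nonzero invariant
*alternating* bilinear form, i.e. the trivial module occurs in its exterior square
(whose character `Λ` satisfies `2Λ = f² - f^{[2]}`). -/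
def HasAltForm (r : ℕ) (d : Fin r → ℕ) : Prop :=
  ∀ f, IsCharA r d f →
    ∃ c : (Fin r → ℕ) →₀ ℕ,
      (f * f - pw 2 f) * altA r (rhoA r)
          = c.sum (fun μ k => ((2 * k : ℕ) : ℤ) • altA r (slWt r μ + rhoA r)) ∧ 1 ≤ c 0

end MFPaper

open MFPaper

namespace Spin

def L1 : List (List ℤ) :=
  [[61, 21, 17, 13, 9, 1, -3, -7],
   [57, 25, 21, 17, 5, 1, -3, -11],
   [57, 25, 21, 13, 9, 5, -7, -11],
   [53, 29, 25, 17, 5, 1, -7, -11],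
   [53, 29, 25, 13, 9, 1, -3, -15],
   [53, 29, 21, 17, 9, 5, -7, -15],
   [53, 25, 21, 17, 13, 9, -11, -15],
   [49, 33, 29, 13, 9, -3, -7, -11],
   [49, 33, 29, 13, 5, 1, -3, -15],
   [49, 33, 25, 17, 9, 1, -7, -15],
   [49, 33, 25, 13, 9, 5, -3, -19],
   [49, 33, 21, 17, 13, 1, -3, -19],
   [49, 29, 25, 21, 9, 5, -11, -15],
   [49, 29, 25, 17, 13, 5, -7, -19],
   [45, 37, 33, 9, 5, 1, -7, -11],
   [45, 37, 29, 13, 9, 1, -7, -15],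
   [45, 37, 25, 17, 13, -3, -7, -15],
   [45, 37, 25, 17, 9, 1, -3, -19],
   [45, 37, 21, 17, 9, 5, 1, -23],
   [45, 33, 29, 17, 13, 1, -11, -15],
   [45, 33, 29, 17, 9, 5, -7, -19],
   [45, 33, 25, 21, 13, 1, -7, -19],
   [45, 33, 25, 17, 13, 5, -3, -23],
   [45, 29, 25, 21, 17, 1, -3, -23],
   [41, 37, 33, 13, 9, 5, -11, -15],
   [41, 37, 29, 17, 13, 1, -7, -19],
   [41, 37, 25, 21, 17, -3, -11, -15],
   [41, 37, 25, 21, 9, 5, -3, -23],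
   [41, 37, 21, 17, 13, 9, 1, -27],
   [41, 33, 29, 21, 17, -3, -7, -19],
   [41, 33, 29, 21, 13, 1, -3, -23],
   [41, 33, 25, 21, 13, 5, 1, -27],
   [37, 33, 29, 25, 21, -7, -11, -15],
   [37, 33, 29, 25, 9, 5, 1, -27],
   [37, 33, 25, 21, 13, 9, 5, -31],
   [33, 29, 25, 21, 17, 13, 9, -35]]

def L3 : List (List ℤ) := L1.map (fun l => (l.map (fun x => 28 - x)).reverse)

def LL (c : Bool) : List (List ℤ) := bif c then L1 else L3

def epsl (l : List ℤ) : ℤ := if l.getD 0 0 % 4 = 1 then 1 else -1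

def sv : ℕ → ℕ → List (List ℤ)
  | 0, 0 => [[]]
  | 0, _ + 1 => []
  | n + 1, 0 => (sv n 0).map (fun l => -1 :: l)
  | n + 1, k + 1 => (sv n k).map (fun l => 1 :: l) ++ (sv n (k + 1)).map (fun l => -1 :: l)

def VV : List ℤ → ℤ
  | [] => 1
  | x :: xs => (xs.map (fun y => y - x)).prod * VV xs

def dot (l b : List ℤ) : ℤ := (List.zipWith (fun x c => x * c) l b).sum

def frcN {α : Type} (n : ℕ) (f : ℕ → α) : α :=
  Nat.rec (motive := fun _ => α) (f 0) (fun k _ => f (Nat.succ k)) n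

def frc {α : Type} (x : ℤ) (f : ℤ → α) : α :=
  Int.rec (motive := fun _ => α) (fun n => frcN n (fun n => f (Int.ofNat n)))
    (fun n => frcN n (fun n => f (Int.negSucc n))) x

def frcL {α : Type} : List ℤ → (List ℤ → α) → α
  | [], f => f []
  | x :: l, f => frc x (fun x => frcL l (fun l => f (x :: l)))

theorem frc_eq {α : Type} (x : ℤ) (f : ℤ → α) : frc x f = f x := by
  rcases x with n | n <;> rcases n with _ | n <;> rfl

theorem frcL_eq {α : Type} (l : List ℤ) (f : List ℤ → α) : frcL l f = f l := by
  induction l generalizing f with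
  | nil => rfl
  | cons x l ih => simp only [frcL, frc_eq, ih]

def Vs : List (List ℤ) := (sv 7 4).map (fun l => l ++ [-1])

def rfl8 (k : ℤ) (l b : List ℤ) : List ℤ := List.zipWith (fun x c => x - 2 * k * c) l b

def chkOne (l b : List ℤ) : Bool :=
  frc (dot l b) fun d => (d % 8 == 0) && frc (d / 8) fun k =>
    frcL (rfl8 k l b) fun y =>
    frcL (y.insertionSort (fun a b => a ≥ b)) fun s =>
      (L1.elem s || L3.elem s) && decide (VV y * (epsl s * epsl l) < 0)

def chkAll : Bool := (L1 ++ L3).all (fun l => Vs.all (fun b => chkOne l b))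

set_option maxRecDepth 100000 in
theorem chkAll_true : chkAll = true := by decide +kernel

def chkL (c : Bool) (l : List ℤ) : Bool :=
  (l.length == 8) && (decide (0 < VV l) && (decide (epsl l = bif c then 1 else -1)
   && (l.all (fun x => x % 4 == (bif c then 1 else 3)) && ((l.sum == 112)
   && (((l.map (fun x => x * x)).sum == 4760)
   && decide (l.Pairwise (fun a b => b < a)))))))

theorem chkL_true : ∀ c : Bool, (LL c).all (chkL c) = true := by decide +kernel

theorem LL_len : ∀ c : Bool, (LL c).length = 36 := by decide +kernel

theorem LL_nodup : ∀ c : Bool, (LL c).Nodup := by decide +kernel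

theorem LL_last : (LL true).getD 35 [] = [33, 29, 25, 21, 17, 13, 9, -35] := by decide +kernel

theorem chk_spec {c : Bool} {l b : List ℤ} (hl : l ∈ LL c) (hb : b ∈ Vs) :
    ∃ k : ℤ, dot l b = 8 * k ∧ ∃ c' : Bool, ∃ s ∈ LL c', (rfl8 k l b).Perm s ∧
      VV (rfl8 k l b) * (epsl s * epsl l) < 0 := by
  have h := chkAll_true
  have hl' : l ∈ L1 ++ L3 := by
    cases c
    · exact List.mem_append_right _ hl
    · exact List.mem_append_left _ hl
  simp only [chkAll, List.all_eq_true] at h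
  have h2 := h l hl' b hb
  simp only [chkOne, frc_eq, frcL_eq, Bool.and_eq_true, Bool.or_eq_true, decide_eq_true_eq,
    beq_iff_eq, List.elem_eq_mem] at h2
  obtain ⟨h3, h4, h5⟩ := h2
  refine ⟨dot l b / 8, by omega, ?_⟩
  rcases h4 with h4 | h4
  · exact ⟨true, _, h4, (List.perm_insertionSort _ _).symm, h5⟩
  · exact ⟨false, _, h4, (List.perm_insertionSort _ _).symm, h5⟩

end Spin

namespace Spin

def vec (l : List ℤ) : Fin 8 → ℤ := fun i => l.getD i 0

abbrev Idx := Bool × Fin 36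

def NL (p : Idx) : List ℤ := (LL p.1).getD p.2 []

def N (p : Idx) : Fin 8 → ℤ := vec (NL p)

def eps (p : Idx) : ℤ := bif p.1 then 1 else -1

theorem NL_mem (p : Idx) : NL p ∈ LL p.1 := by
  have h : (p.2 : ℕ) < (LL p.1).length := by rw [LL_len]; exact p.2.2
  rw [NL, List.getD_eq_getElem _ _ h]
  exact List.getElem_mem h

theorem exists_NL {c : Bool} {s : List ℤ} (h : s ∈ LL c) : ∃ k, NL (c, k) = s := by
  obtain ⟨n, hn, rfl⟩ := List.getElem_of_mem h
  refine ⟨⟨n, by rw [← LL_len c]; exact hn⟩, ?_⟩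
  simp only [NL]
  rw [List.getD_eq_getElem _ _ hn]

theorem NL_inj {c : Bool} {k k' : Fin 36} (h : NL (c, k) = NL (c, k')) : k = k' := by
  have h1 : (k : ℕ) < (LL c).length := by rw [LL_len]; exact k.2
  have h2 : (k' : ℕ) < (LL c).length := by rw [LL_len]; exact k'.2
  simp only [NL] at h
  rw [List.getD_eq_getElem _ _ h1, List.getD_eq_getElem _ _ h2] at h
  exact Fin.ext ((List.Nodup.getElem_inj_iff (LL_nodup c)).1 h)

theorem chkNL (p : Idx) : chkL p.1 (NL p) = true := by
  have := chkL_true p.1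
  rw [List.all_eq_true] at this
  exact this _ (NL_mem p)

theorem NL_spec (p : Idx) : (NL p).length = 8 ∧ 0 < VV (NL p) ∧ epsl (NL p) = eps p ∧
    (∀ x ∈ NL p, x % 4 = bif p.1 then 1 else 3) ∧ (NL p).sum = 112 ∧
    ((NL p).map (fun x => x * x)).sum = 4760 ∧ (NL p).Pairwise (fun a b => b < a) := by
  have h := chkNL p
  simp only [chkL, Bool.and_eq_true, decide_eq_true_eq, beq_iff_eq, List.all_eq_true] at h
  exact h

theorem ofFn_vec {l : List ℤ} (h : l.length = 8) : List.ofFn (vec l) = l := by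
  apply List.ext_getElem
  · simp [h]
  · intro i h1 h2
    rw [List.getElem_ofFn]
    simp only [vec]
    rw [List.getD_eq_getElem _ _ h2]

theorem ofFn_N (p : Idx) : List.ofFn (N p) = NL p := ofFn_vec (NL_spec p).1

theorem VV_ofFn {n : ℕ} (x : Fin n → ℤ) :
    VV (List.ofFn x) = (Matrix.vandermonde x).det := by
  rw [Matrix.det_vandermonde]
  induction n with
  | zero => simp [VV]
  | succ n ih =>
    rw [List.ofFn_succ, VV, ih, Fin.prod_univ_succ, Fin.Ioi_zero_eq_map, Finset.prod_map]
    congr 1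
    · rw [List.map_ofFn, List.prod_ofFn]; rfl
    · refine Finset.prod_congr rfl fun i _ => ?_
      rw [Fin.prod_Ioi_succ (fun j => x j - x i.succ)]

theorem VV_perm (x : Fin 8 → ℤ) (τ : Equiv.Perm (Fin 8)) :
    VV (List.ofFn (x ∘ τ)) = (Equiv.Perm.sign τ : ℤ) * VV (List.ofFn x) := by
  rw [VV_ofFn, VV_ofFn]
  have h := Matrix.det_permute τ (Matrix.vandermonde x)
  exact h

theorem zipWith_ofFn {n : ℕ} (f : ℤ → ℤ → ℤ) (x y : Fin n → ℤ) :
    List.zipWith f (List.ofFn x) (List.ofFn y) = List.ofFn (fun i => f (x i) (y i)) := by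
  apply List.ext_getElem
  · simp
  · intro i h1 h2
    simp

theorem exists_tau {x y : Fin 8 → ℤ} (h : (List.ofFn y).Perm (List.ofFn x))
    (hx : Function.Injective x) : ∃ τ : Equiv.Perm (Fin 8), y = x ∘ τ := by
  have hy : Function.Injective y := by
    rw [← List.nodup_ofFn, h.nodup_iff, List.nodup_ofFn]; exact hx
  have h1 : ∀ i, ∃ j, y i = x j := by
    intro i
    have : y i ∈ List.ofFn x := h.mem_iff.1 (List.mem_ofFn.2 ⟨i, rfl⟩)
    rw [List.mem_ofFn] at this
    obtain ⟨j, hj⟩ := this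
    exact ⟨j, hj.symm⟩
  choose t ht using h1
  have ti : Function.Injective t := by
    intro a b hab
    apply hy
    rw [ht, ht, hab]
  refine ⟨Equiv.ofBijective t (Finite.injective_iff_bijective.1 ti), ?_⟩
  funext i
  exact ht i

theorem N_anti (p : Idx) : StrictAnti (N p) := by
  have h := (NL_spec p).2.2.2.2.2.2
  rw [← ofFn_N, List.pairwise_ofFn] at h
  intro i j hij
  exact h hij

theorem N_mod (p : Idx) (i : Fin 8) : N p i % 4 = bif p.1 then 1 else 3 := by
  apply (NL_spec p).2.2.2.1
  rw [← ofFn_N]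
  exact List.mem_ofFn.2 ⟨i, rfl⟩

theorem N_sum (p : Idx) : ∑ i, N p i = 112 := by
  have h := (NL_spec p).2.2.2.2.1
  rwa [← ofFn_N, List.sum_ofFn] at h

theorem N_sq (p : Idx) : ∑ i, N p i * N p i = 4760 := by
  have h := (NL_spec p).2.2.2.2.2.1
  rw [← ofFn_N, List.map_ofFn, List.sum_ofFn] at h
  exact h

theorem eps_sq (p : Idx) : eps p = 1 ∨ eps p = -1 := by
  rcases p with ⟨_ | _, k⟩
  · exact Or.inr rfl
  · exact Or.inl rfl

theorem N_inj {p p' : Idx} (h : N p = N p') : p = p' := by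
  obtain ⟨c, k⟩ := p
  obtain ⟨c', k'⟩ := p'
  have hc : c = c' := by
    have h1 := N_mod (c, k) 0
    have h2 := N_mod (c', k') 0
    rw [h, h2] at h1
    cases c <;> cases c' <;> simp_all
  subst hc
  have : k = k' := by
    apply NL_inj (c := c)
    rw [← ofFn_N, ← ofFn_N, h]
  rw [this]

theorem N_comp_inj {p p' : Idx} {σ σ' : Equiv.Perm (Fin 8)} (h : N p ∘ σ = N p' ∘ σ') :
    p = p' ∧ σ = σ' := by
  have h1 : N p = N p' ∘ (σ.symm.trans σ') := by
    funext i
    have := congrFun h (σ.symm i)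
    simpa using this
  have hm : StrictMono (σ.symm.trans σ') := by
    intro i j hij
    have h2 := N_anti p hij
    rw [h1] at h2
    exact (N_anti p').lt_iff_gt.1 h2
  have h3 : (σ.symm.trans σ') = 1 := by
    have : (hm.orderIsoOfSurjective _ (Equiv.surjective _)) = OrderIso.refl (Fin 8) :=
      Subsingleton.elim _ _
    ext i
    have := congrArg (fun e => e i) this
    simp only [StrictMono.coe_orderIsoOfSurjective, OrderIso.refl_apply] at this
    rw [this]; rfl
  have h4 : σ = σ' := by
    ext i
    have := congrArg (fun e => e (σ i)) h3
    simp at this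
    rw [this]
  refine ⟨N_inj ?_, h4⟩
  rw [h1, h3]; rfl

theorem mem_sv (l : List ℤ) (h : ∀ x ∈ l, x = 1 ∨ x = -1) :
    ∃ k : ℕ, l.sum = 2 * k - l.length ∧ l ∈ sv l.length k := by
  induction l with
  | nil => exact ⟨0, by simp, by simp [sv]⟩
  | cons x l ih =>
    obtain ⟨k, hk, hm⟩ := ih (fun y hy => h y (List.mem_cons_of_mem _ hy))
    rcases h x List.mem_cons_self with rfl | rfl
    · refine ⟨k + 1, by simp [hk]; ring, ?_⟩
      simp [sv, hm]
    · refine ⟨k, by simp [hk]; ring, ?_⟩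
      cases k <;> simp [sv, hm]

theorem mem_sv_iff (n k : ℕ) (l : List ℤ) (h : l ∈ sv n k) :
    l.length = n ∧ (∀ x ∈ l, x = 1 ∨ x = -1) ∧ l.sum = 2 * k - n := by
  induction n generalizing k l with
  | zero =>
    cases k
    · simp [sv] at h; simp [h]
    · simp [sv] at h
  | succ n ih =>
    cases k with
    | zero =>
      simp only [sv, List.mem_map] at h
      obtain ⟨l', h', rfl⟩ := h
      obtain ⟨h1, h2, h3⟩ := ih _ _ h'
      refine ⟨by simp [h1], by simpa using h2, by simp [h3]⟩
    | succ k =>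
      simp only [sv, List.mem_append, List.mem_map] at h
      rcases h with ⟨l', h', rfl⟩ | ⟨l', h', rfl⟩
      · obtain ⟨h1, h2, h3⟩ := ih _ _ h'
        refine ⟨by simp [h1], by simpa using h2, by simp [h3]; ring⟩
      · obtain ⟨h1, h2, h3⟩ := ih _ _ h'
        refine ⟨by simp [h1], by simpa using h2, by simp [h3]; ring⟩

theorem mem_Vs_of {b : Fin 8 → ℤ} (h : ∀ i, b i = 1 ∨ b i = -1) (hs : ∑ i, b i = 0)
    (h7 : b 7 = -1) : List.ofFn b ∈ Vs := by
  have e : List.ofFn b = List.ofFn (fun i : Fin 7 => b i.castSucc) ++ [-1] := by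
    rw [List.ofFn_succ_last, ← h7]; rfl
  rw [e, Vs, List.mem_map]
  refine ⟨_, ?_, rfl⟩
  obtain ⟨k, hk, hm⟩ := mem_sv (List.ofFn (fun i : Fin 7 => b i.castSucc)) (by
    intro x hx
    rw [List.mem_ofFn] at hx
    obtain ⟨j, rfl⟩ := hx
    exact h _)
  rw [Fin.sum_univ_castSucc] at hs
  rw [List.sum_ofFn] at hk
  have h7' : b (Fin.last 7) = -1 := h7
  rw [hk, h7'] at hs
  simp only [List.length_ofFn] at hs hm
  have : k = 4 := by push_cast at hs; omega
  rwa [this] at hm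

theorem mem_Vs {l : List ℤ} (h : l ∈ Vs) : ∃ b : Fin 8 → ℤ, l = List.ofFn b ∧
    (∀ i, b i = 1 ∨ b i = -1) ∧ ∑ i, b i = 0 ∧ b 7 = -1 := by
  rw [Vs, List.mem_map] at h
  obtain ⟨l', hl', rfl⟩ := h
  obtain ⟨h1, h2, h3⟩ := mem_sv_iff _ _ _ hl'
  have e := ofFn_vec (l := l' ++ [-1]) (by simp [h1])
  refine ⟨vec (l' ++ [-1]), e.symm, ?_, ?_, ?_⟩
  · intro i
    have : vec (l' ++ [-1]) i ∈ l' ++ [-1] := by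
      have h0 : vec (l' ++ [-1]) i ∈ List.ofFn (vec (l' ++ [-1])) := List.mem_ofFn.2 ⟨i, rfl⟩
      rwa [e] at h0
    simp only [List.mem_append, List.mem_singleton] at this
    rcases this with h | h
    · exact h2 _ h
    · exact Or.inr h
  · rw [← List.sum_ofFn, e]; simp [h3]
  · simp [vec, h1]

theorem key_aux (p : Idx) (b : Fin 8 → ℤ) (hb : ∀ i, b i = 1 ∨ b i = -1) (hs : ∑ i, b i = 0)
    (h7 : b 7 = -1) :
    ∃ k : ℤ, ∑ i, N p i * b i = 8 * k ∧ ∃ p' : Idx, ∃ τ : Equiv.Perm (Fin 8),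
      (fun i => N p i - 2 * k * b i) = N p' ∘ τ ∧ (Equiv.Perm.sign τ : ℤ) * eps p' = - eps p := by
  obtain ⟨k, hk, c', s, hs', hperm, hV⟩ := chk_spec (NL_mem p) (mem_Vs_of hb hs h7)
  obtain ⟨j, rfl⟩ := exists_NL hs'
  rw [← ofFn_N, dot, zipWith_ofFn, List.sum_ofFn] at hk
  rw [rfl8, ← ofFn_N, ← ofFn_N, zipWith_ofFn] at hperm
  obtain ⟨τ, hτ⟩ := exists_tau hperm (N_anti _).injective
  refine ⟨k, hk, (c', j), τ, hτ, ?_⟩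
  have h3 := (NL_spec (c', j)).2.1
  rw [(NL_spec p).2.2.1, (NL_spec (c', j)).2.2.1, rfl8, ← ofFn_N, zipWith_ofFn, hτ, VV_perm,
    ofFn_N] at hV
  have hsg : (Equiv.Perm.sign τ : ℤ) = 1 ∨ (Equiv.Perm.sign τ : ℤ) = -1 := by
    rcases Int.units_eq_one_or (Equiv.Perm.sign τ) with h | h <;> simp [h]
  rcases hsg with h | h <;> rcases eps_sq p with h1 | h1 <;> rcases eps_sq (c', j) with h2 | h2 <;>
    rw [h, h1, h2] at hV <;> rw [h, h1, h2] <;> first | (exfalso; linarith) | norm_num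

theorem key (p : Idx) (b : Fin 8 → ℤ) (hb : ∀ i, b i = 1 ∨ b i = -1) (hs : ∑ i, b i = 0) :
    ∃ k : ℤ, ∑ i, N p i * b i = 8 * k ∧ ∃ p' : Idx, ∃ τ : Equiv.Perm (Fin 8),
      (fun i => N p i - 2 * k * b i) = N p' ∘ τ ∧ (Equiv.Perm.sign τ : ℤ) * eps p' = - eps p := by
  rcases hb 7 with h7 | h7
  · obtain ⟨k, hk, p', τ, h1, h2⟩ := key_aux p (fun i => - b i)
      (fun i => by rcases hb i with h | h <;> simp [h]) (by simp [hs]) (by simp [h7])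
    refine ⟨-k, ?_, p', τ, ?_, h2⟩
    · simp at hk; linarith
    · rw [← h1]; funext i; ring
  · exact key_aux p b hb hs h7

end Spin

namespace Spin

abbrev W8 := Fin 8 → ℚ

theorem mono_add {k : ℕ} (u v : Fin k → ℚ) : mono u * mono v = mono (u + v) := by
  simp [mono, AddMonoidAlgebra.single_mul_single]

theorem mono_zero {k : ℕ} : mono (0 : Fin k → ℚ) = 1 := rfl

theorem coeff_mono {k : ℕ} (u x : Fin k → ℚ) : (mono u).coeff x = if u = x then 1 else 0 := by
  classical
  simp [mono, Finsupp.single_apply]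

theorem coeff_mono_mul {k : ℕ} (u x : Fin k → ℚ) (P : CharRing k) :
    (mono u * P).coeff x = P.coeff (x - u) := by
  have := AddMonoidAlgebra.coeff_single_mul_apply P (1 : ℤ) u x
  simpa [mono, neg_add_eq_sub] using this

/-- The additive map induced ring hom. -/
def mp {k l : ℕ} (s : (Fin k → ℚ) →+ (Fin l → ℚ)) : CharRing k →+* CharRing l :=
  AddMonoidAlgebra.mapDomainRingHom ℤ s

theorem mp_mono {k l : ℕ} (s : (Fin k → ℚ) →+ (Fin l → ℚ)) (u : Fin k → ℚ) :
    mp s (mono u) = mono (s u) := by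
  simp [mp, mono]

theorem mp_coeff {k l : ℕ} (s : (Fin k → ℚ) →+ (Fin l → ℚ)) (hs : Function.Injective s)
    (F : CharRing k) (x : Fin k → ℚ) : (mp s F).coeff (s x) = F.coeff x := by
  simp only [mp, AddMonoidAlgebra.mapDomainRingHom_apply, AddMonoidAlgebra.coeff_mapDomain]
  exact Finsupp.mapDomain_apply hs _ _

def bb {k : ℕ} (u : Fin k → ℚ) : CharRing k := mono u - mono (-u)

theorem bb_neg {k : ℕ} (u : Fin k → ℚ) : bb (-u) = - bb u := by simp [bb]

theorem mp_bb {k l : ℕ} (s : (Fin k → ℚ) →+ (Fin l → ℚ)) (u : Fin k → ℚ) :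
    mp s (bb u) = bb (s u) := by
  simp [bb, mp_mono]

theorem coeff_bb_mul {k : ℕ} (u x : Fin k → ℚ) (P : CharRing k) :
    (bb u * P).coeff x = P.coeff (x - u) - P.coeff (x + u) := by
  rw [bb, sub_mul]
  simp [coeff_mono_mul]

def ip (x y : W8) : ℚ := ∑ i, x i * y i

theorem ip_add (x y z : W8) : ip (x + y) z = ip x z + ip y z := by
  simp [ip, add_mul, Finset.sum_add_distrib]

theorem ip_sub (x y z : W8) : ip (x - y) z = ip x z - ip y z := by
  simp [ip, sub_mul, Finset.sum_sub_distrib]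

theorem ip_smul (c : ℚ) (x z : W8) : ip (c • x) z = c * ip x z := by
  simp [ip, Finset.mul_sum, mul_assoc]

def srefl (a : W8) : W8 →+ W8 where
  toFun x := x - ip x a • a
  map_zero' := by simp [ip]
  map_add' x y := by rw [ip_add]; module

theorem srefl_apply (a x : W8) : srefl a x = x - ip x a • a := rfl

theorem srefl_invol {a : W8} (ha : ip a a = 2) (x : W8) : srefl a (srefl a x) = x := by
  simp only [srefl_apply, ip_sub, ip_smul, ha]
  module

def qv (x : Fin 8 → ℤ) : W8 := fun i => (x i : ℚ) / 4

def qvec (l : List ℤ) : W8 := qv (vec l)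

def SR : Fin 7 → List ℤ := ![[2, -2, 0, 0, 0, 0, 0, 0], [0, 2, -2, 0, 0, 0, 0, 0],
  [0, 0, 2, -2, 0, 0, 0, 0], [0, 0, 0, 2, -2, 0, 0, 0], [0, 0, 0, 0, 2, -2, 0, 0],
  [0, 0, 0, 0, 0, 2, -2, 0], [-1, -1, -1, 1, 1, 1, 1, -1]]

def al (j : Fin 7) : W8 := fun i => (vec (SR j) i : ℚ) / 2

def rho : W8 := qvec [33, 29, 25, 21, 17, 13, 9, -35]

theorem ip_al (x : W8) : ip x (al 0) = x 0 - x 1 ∧ ip x (al 1) = x 1 - x 2 ∧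
    ip x (al 2) = x 2 - x 3 ∧ ip x (al 3) = x 3 - x 4 ∧ ip x (al 4) = x 4 - x 5 ∧
    ip x (al 5) = x 5 - x 6 ∧
    ip x (al 6) = (- x 0 - x 1 - x 2 + x 3 + x 4 + x 5 + x 6 - x 7) / 2 := by
  simp only [ip, Fin.sum_univ_eight]
  refine ⟨?_, ?_, ?_, ?_, ?_, ?_, ?_⟩ <;> simp [al, SR, vec] <;> ring

theorem ip_rho (x : W8) : ip x rho = (33 * x 0 + 29 * x 1 + 25 * x 2 + 21 * x 3 + 17 * x 4 +
    13 * x 5 + 9 * x 6 - 35 * x 7) / 4 := by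
  simp only [ip, Fin.sum_univ_eight]
  simp [rho, qvec, qv, vec]; ring

theorem al_al (j : Fin 7) : ip (al j) (al j) = 2 := by
  fin_cases j <;> simp [ip, Fin.sum_univ_eight, al, SR, vec] <;> norm_num

theorem al_rho (j : Fin 7) : ip (al j) rho = 1 := by
  rw [ip_rho]
  fin_cases j <;> simp [al, SR, vec] <;> norm_num

def RA : List (List ℤ) :=
  (List.finRange 8).flatMap fun i => ((List.finRange 8).filter (fun j => i < j)).map fun j =>
    List.ofFn (fun k : Fin 8 => if k = i then (2 : ℤ) else if k = j then -2 else 0)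

def RR : List (List ℤ) := RA ++ Vs

def ir (r l : List ℤ) : List ℤ := List.zipWith (fun x c => x - (dot l r / 4) * c) l r

def chkR (r : List ℤ) : Bool :=
  RR.elem r && (RR.all (fun l => dot l r % 4 == 0) &&
    ((RR.map (ir r)).isPerm ((r.map (fun x => -x)) :: RR.erase r)))

theorem chkR_true : ∀ j, chkR (SR j) = true := by decide +kernel

theorem RR_len : ∀ l ∈ RR, l.length = 8 := by decide +kernel

theorem SR_len : ∀ j, (SR j).length = 8 := by decide +kernel

def RRpos (l : List ℤ) : Bool := decide (0 < dot l [33, 29, 25, 21, 17, 13, 9, -35])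
  && (l.sum == 0)

theorem RRpos_true : RR.all RRpos = true := by decide +kernel

def vsum (L : List (List ℤ)) : List ℤ :=
  L.foldr (fun l m => List.zipWith (fun x y => x + y) l m) [0, 0, 0, 0, 0, 0, 0, 0]

theorem RR_sum : vsum RR = [19, 15, 11, 7, 3, -1, -5, -49] := by decide +kernel

end Spin

namespace Spin

theorem dot_eq {l r : List ℤ} (hl : l.length = 8) (hr : r.length = 8) :
    dot l r = ∑ i, vec l i * vec r i := by
  conv_lhs => rw [← ofFn_vec hl, ← ofFn_vec hr]
  rw [dot, zipWith_ofFn, List.sum_ofFn]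

theorem vec_ofFn (x : Fin 8 → ℤ) : vec (List.ofFn x) = x := by
  funext i
  have h : (i : ℕ) < (List.ofFn x).length := by rw [List.length_ofFn]; exact i.2
  simp only [vec]
  rw [List.getD_eq_getElem _ _ h, List.getElem_ofFn]

theorem vec_zipWith (f : ℤ → ℤ → ℤ) {l r : List ℤ} (hl : l.length = 8) (hr : r.length = 8) :
    vec (List.zipWith f l r) = fun i => f (vec l i) (vec r i) := by
  conv_lhs => rw [← ofFn_vec hl, ← ofFn_vec hr]
  rw [zipWith_ofFn, vec_ofFn]

theorem vec_map (f : ℤ → ℤ) {l : List ℤ} (hl : l.length = 8) :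
    vec (l.map f) = fun i => f (vec l i) := by
  conv_lhs => rw [← ofFn_vec hl]
  rw [List.map_ofFn, vec_ofFn]; rfl

theorem ip_qvec_al {l : List ℤ} (hl : l.length = 8) (j : Fin 7) :
    ip (qvec l) (al j) = (dot l (SR j) : ℚ) / 8 := by
  rw [dot_eq hl (SR_len j)]
  push_cast
  rw [Finset.sum_div, ip]
  refine Finset.sum_congr rfl fun i _ => ?_
  simp only [qvec, qv, al]; ring

theorem srefl_qvec {l : List ℤ} (hl : l.length = 8) (j : Fin 7) (h4 : dot l (SR j) % 4 = 0) :
    srefl (al j) (qvec l) = qvec (ir (SR j) l) := by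
  obtain ⟨k, hk⟩ : ∃ k, dot l (SR j) = 4 * k := ⟨dot l (SR j) / 4, by omega⟩
  rw [srefl_apply, ip_qvec_al hl, ir, hk]
  funext i
  simp only [qvec, vec_zipWith _ hl (SR_len j), qv, Pi.sub_apply, Pi.smul_apply, smul_eq_mul, al]
  have : 4 * k / 4 = k := by omega
  rw [this]
  push_cast; ring

def PR : CharRing 8 := (RR.map (fun l => bb (qvec l))).prod

theorem PR_anti (j : Fin 7) : mp (srefl (al j)) PR = - PR := by
  have h := chkR_true j
  simp only [chkR, Bool.and_eq_true, List.elem_eq_mem, decide_eq_true_eq, List.all_eq_true,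
    beq_iff_eq, List.isPerm_iff] at h
  obtain ⟨h1, h2, h3⟩ := h
  have e1 : mp (srefl (al j)) PR = ((RR.map (ir (SR j))).map (fun l => bb (qvec l))).prod := by
    rw [PR, map_list_prod, List.map_map, List.map_map]
    congr 1
    apply List.map_congr_left
    intro l hl
    simp only [Function.comp, mp_bb, srefl_qvec (RR_len l hl) j (h2 l hl)]
  rw [e1, (h3.map _).prod_eq, List.map_cons, List.prod_cons]
  have e2 : qvec ((SR j).map (fun x => -x)) = - qvec (SR j) := by
    funext i
    simp only [qvec, vec_map _ (SR_len j), qv, Pi.neg_apply]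
    push_cast; ring
  rw [e2, bb_neg, neg_mul, PR, ((List.perm_cons_erase h1).map _).prod_eq, List.map_cons,
    List.prod_cons]

/-- lattice -/
def Lat : AddSubgroup W8 where
  carrier := {x | (∀ j, ∃ k : ℤ, ip x (al j) = k) ∧ ∑ i, x i = 0}
  zero_mem' := ⟨fun j => ⟨0, by simp [ip]⟩, by simp⟩
  add_mem' := by
    rintro x y ⟨h1, h2⟩ ⟨h3, h4⟩
    refine ⟨fun j => ?_, by simp [Finset.sum_add_distrib, h2, h4]⟩
    obtain ⟨k, hk⟩ := h1 j
    obtain ⟨k', hk'⟩ := h3 j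
    exact ⟨k + k', by rw [ip_add, hk, hk']; push_cast; ring⟩
  neg_mem' := by
    rintro x ⟨h1, h2⟩
    refine ⟨fun j => ?_, by simp [h2]⟩
    obtain ⟨k, hk⟩ := h1 j
    refine ⟨-k, ?_⟩
    have : -x = (-1 : ℚ) • x := by simp
    rw [this, ip_smul, hk]; push_cast; ring

def Tri (P : CharRing 8) (m : W8) : Prop :=
  P.coeff m = 1 ∧ ∀ x, P.coeff x ≠ 0 → x - m ∈ Lat ∧ (x = m ∨ ip x rho < ip m rho)

theorem Tri_one : Tri 1 0 := by
  rw [← mono_zero]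
  refine ⟨by simp [coeff_mono], fun x hx => ?_⟩
  have : x = 0 := by
    by_contra h
    exact hx (by rw [coeff_mono, if_neg (fun h' => h h'.symm)])
  subst this
  exact ⟨by simp [Lat.zero_mem], Or.inl rfl⟩

theorem Tri_bb {P : CharRing 8} {m r : W8} (h : Tri P m) (hr : 0 < ip r rho)
    (hL : r + r ∈ Lat) : Tri (bb r * P) (r + m) := by
  obtain ⟨h1, h2⟩ := h
  constructor
  · rw [coeff_bb_mul]
    have : P.coeff (r + m + r) = 0 := by
      by_contra h0
      rcases (h2 _ h0).2 with h3 | h3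
      · have : ip (r + m + r) rho = ip m rho := by rw [h3]
        rw [ip_add, ip_add] at this
        linarith
      · rw [ip_add, ip_add] at h3
        linarith
    rw [this, add_sub_cancel_left, h1]; rfl
  · intro x hx
    rw [coeff_bb_mul] at hx
    by_cases h0 : P.coeff (x - r) = 0
    · have h3 : P.coeff (x + r) ≠ 0 := by
        intro h4; rw [h0, h4] at hx; simp at hx
      obtain ⟨h5, h6⟩ := h2 _ h3
      refine ⟨?_, Or.inr ?_⟩
      · have := Lat.sub_mem h5 hL
        convert this using 1
        abel
      · rw [ip_add]
        rcases h6 with h6 | h6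
        · rw [← h6, ip_add]; linarith
        · rw [ip_add] at h6; linarith
    · obtain ⟨h5, h6⟩ := h2 _ h0
      refine ⟨by convert h5 using 1; abel, ?_⟩
      rcases h6 with h6 | h6
      · left; rw [← h6]; abel
      · right; rw [ip_sub] at h6; rw [ip_add]; linarith

theorem Tri_list (L : List W8) (h : ∀ r ∈ L, 0 < ip r rho ∧ r + r ∈ Lat) :
    Tri (L.map bb).prod L.sum := by
  induction L with
  | nil => exact Tri_one
  | cons r L ih =>
    rw [List.map_cons, List.prod_cons, List.sum_cons]
    exact Tri_bb (ih fun r hr => h r (List.mem_cons_of_mem _ hr)) (h r List.mem_cons_self).1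
      (h r List.mem_cons_self).2

theorem vsum_len (L : List (List ℤ)) (h : ∀ l ∈ L, l.length = 8) : (vsum L).length = 8 := by
  induction L with
  | nil => rfl
  | cons l L ih =>
    have := ih fun r hr => h r (List.mem_cons_of_mem _ hr)
    have h2 := h l List.mem_cons_self
    simp only [vsum] at this
    simp only [vsum, List.foldr_cons, List.length_zipWith, this, h2, min_self]

theorem qvec_vsum (L : List (List ℤ)) (h : ∀ l ∈ L, l.length = 8) :
    (L.map qvec).sum = qvec (vsum L) := by
  induction L with
  | nil =>
    funext i
    fin_cases i <;> simp [vsum, qvec, qv, vec]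
  | cons l L ih =>
    have h1 := fun r hr => h r (List.mem_cons_of_mem l hr)
    rw [List.map_cons, List.sum_cons, ih h1]
    funext i
    have e : vsum (l :: L) = List.zipWith (fun x y => x + y) l (vsum L) := rfl
    rw [e]
    simp only [qvec, qv, vec_zipWith _ (h l List.mem_cons_self) (vsum_len L h1), Pi.add_apply]
    push_cast; ring

def half7 : W8 := fun _ => 7 / 2

theorem PR_tri : Tri PR (rho - half7) := by
  have h := Tri_list (RR.map qvec) (by
    intro r hr
    rw [List.mem_map] at hr
    obtain ⟨l, hl, rfl⟩ := hr
    have h1 := RRpos_true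
    rw [List.all_eq_true] at h1
    have h1 := h1 l hl
    simp only [RRpos, Bool.and_eq_true, decide_eq_true_eq, beq_iff_eq] at h1
    obtain ⟨h2, h3⟩ := h1
    have hlen := RR_len l hl
    constructor
    · rw [dot_eq hlen rfl] at h2
      have h2' : (0 : ℚ) < ((∑ i, vec l i * vec [33, 29, 25, 21, 17, 13, 9, -35] i : ℤ) : ℚ) := by
        exact_mod_cast h2
      have e : ip (qvec l) rho =
          ((∑ i, vec l i * vec [33, 29, 25, 21, 17, 13, 9, -35] i : ℤ) : ℚ) / 16 := by
        push_cast
        rw [ip, Finset.sum_div]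
        refine Finset.sum_congr rfl fun i _ => ?_
        simp only [rho, qvec, qv]; ring
      rw [e]; positivity
    · refine ⟨fun j => ?_, ?_⟩
      · have h := chkR_true j
        simp only [chkR, Bool.and_eq_true, List.all_eq_true, beq_iff_eq] at h
        have h4 := h.2.1 l hl
        refine ⟨dot l (SR j) / 4, ?_⟩
        rw [ip_add, ip_qvec_al hlen]
        obtain ⟨k, hk⟩ : ∃ k, dot l (SR j) = 4 * k := ⟨dot l (SR j) / 4, by omega⟩
        rw [hk]
        have : 4 * k / 4 = k := by omega
        rw [this]; push_cast; ring
      · have : ∑ i, vec l i = 0 := by rw [← List.sum_ofFn, ofFn_vec hlen, h3]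
        have h5 : ((∑ i, vec l i : ℤ) : ℚ) = 0 := by rw [this]; rfl
        push_cast at h5
        simp only [Pi.add_apply, qvec, qv, Finset.sum_add_distrib, ← Finset.sum_div, h5]
        simp)
  rw [qvec_vsum _ RR_len, RR_sum, List.map_map] at h
  have e : rho - half7 = qvec [19, 15, 11, 7, 3, -1, -5, -49] := by
    funext i
    fin_cases i <;> simp [rho, half7, qvec, qv, vec] <;> norm_num
  rw [e]; exact h

theorem unique_zero (F : CharRing 8) (hF : ∀ j, mp (srefl (al j)) F = - F)
    (hs : ∀ x, F.coeff x ≠ 0 → x - rho ∈ Lat ∧ ip x rho < ip rho rho) : F = 0 := by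
  by_contra h0
  have hne : F.coeff.support.Nonempty := by
    rw [Finsupp.support_nonempty_iff]
    intro h
    exact h0 (AddMonoidAlgebra.ext h)
  obtain ⟨x, hx, hmax⟩ := Finset.exists_max_image F.coeff.support (fun x => ip x rho) hne
  rw [Finsupp.mem_support_iff] at hx
  have hpos : ∀ j, 1 ≤ ip x (al j) - ip rho (al j) + 1 := by
    intro j
    have hsx : F.coeff (srefl (al j) x) = - F.coeff x := by
      have h1 := mp_coeff (srefl (al j))
        (Function.LeftInverse.injective (srefl_invol (al_al j))) F x
      rw [hF j] at h1
      rw [← h1]; simp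
    have h2 : F.coeff (srefl (al j) x) ≠ 0 := by rw [hsx]; simpa using hx
    have h3 := hmax _ (Finsupp.mem_support_iff.2 h2)
    simp only [srefl_apply, ip_sub, ip_smul, al_rho] at h3
    have h4 : ip x (al j) ≠ 0 := by
      intro h5
      rw [srefl_apply, h5] at hsx
      simp at hsx
      exact hx (by omega)
    have h6 : 0 < ip x (al j) := lt_of_le_of_ne (by linarith) (Ne.symm h4)
    obtain ⟨k, hk⟩ := (hs x hx).1.1 j
    rw [ip_sub] at hk
    have hrho : ip rho (al j) = 1 := by
      rw [← al_rho j, ip, ip]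
      exact Finset.sum_congr rfl fun i _ => mul_comm _ _
    rw [hrho] at hk
    rw [hrho]
    have : (-1 : ℚ) < k := by rw [← hk]; linarith
    have : (-1 : ℤ) < k := by exact_mod_cast this
    have : (0 : ℤ) ≤ k := by omega
    have : (0 : ℚ) ≤ k := by exact_mod_cast this
    linarith
  obtain ⟨⟨-, hsum⟩, hlt⟩ := hs x hx
  set y := x - rho with hy
  have hyp : ∀ j, 0 ≤ ip y (al j) := by
    intro j
    have := hpos j
    rw [hy, ip_sub]; linarith
  have hylt : ip y rho < 0 := by rw [hy, ip_sub]; linarith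
  obtain ⟨a0, a1, a2, a3, a4, a5, a6⟩ := ip_al y
  have b0 := hyp 0
  have b1 := hyp 1
  have b2 := hyp 2
  have b3 := hyp 3
  have b4 := hyp 4
  have b5 := hyp 5
  have b6 := hyp 6
  rw [a0] at b0
  rw [a1] at b1
  rw [a2] at b2
  rw [a3] at b3
  rw [a4] at b4
  rw [a5] at b5
  rw [a6] at b6
  rw [ip_rho] at hylt
  rw [Fin.sum_univ_eight] at hsum
  linarith

end Spin

namespace Spin

abbrev TI := Idx × Equiv.Perm (Fin 8)

def XX (t : TI) : W8 := qv (N t.1 ∘ t.2)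

def co (t : TI) : ℤ := eps t.1 * ((Equiv.Perm.sign t.2 : ℤˣ) : ℤ)

def DD : CharRing 8 := ∑ t : TI, co t • mono (XX t)

theorem qv_inj {x y : Fin 8 → ℤ} (h : qv x = qv y) : x = y := by
  funext i
  have := congrFun h i
  simp only [qv] at this
  have h2 : (x i : ℚ) = y i := by linarith
  exact_mod_cast h2

theorem XX_inj : Function.Injective XX := by
  rintro ⟨p, σ⟩ ⟨p', σ'⟩ h
  obtain ⟨h1, h2⟩ := N_comp_inj (qv_inj h)
  exact Prod.ext h1 h2

theorem coeff_sum' {ι : Type} {k : ℕ} (s : Finset ι) (f : ι → CharRing k) (x : Fin k → ℚ) :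
    (∑ i ∈ s, f i).coeff x = ∑ i ∈ s, (f i).coeff x := by
  classical
  induction s using Finset.induction_on with
  | empty => simp
  | insert a s ha ih => rw [Finset.sum_insert ha, Finset.sum_insert ha, ← ih]; simp

theorem coeff_smul' {k : ℕ} (c : ℤ) (f : CharRing k) (x : Fin k → ℚ) :
    (c • f).coeff x = c * f.coeff x := by
  rw [AddMonoidAlgebra.coeff_smul]
  simp

theorem gen_coeff {ι : Type} (s : Finset ι) {k : ℕ} (X : ι → Fin k → ℚ) (c : ι → ℤ)
    (hX : Function.Injective X) (t : ι) (ht : t ∈ s) :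
    (∑ t ∈ s, c t • mono (X t)).coeff (X t) = c t := by
  rw [coeff_sum', Finset.sum_eq_single t]
  · rw [coeff_smul', coeff_mono, if_pos rfl, mul_one]
  · intro t' _ ht
    rw [coeff_smul', coeff_mono, if_neg (fun h => ht (hX h)), mul_zero]
  · exact fun h => absurd ht h

theorem gen_supp {ι : Type} (s : Finset ι) {k : ℕ} (X : ι → Fin k → ℚ) (c : ι → ℤ)
    (x : Fin k → ℚ) (h : (∑ t ∈ s, c t • mono (X t)).coeff x ≠ 0) : ∃ t ∈ s, X t = x := by
  rw [coeff_sum'] at h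
  obtain ⟨t, hs, ht⟩ := Finset.exists_ne_zero_of_sum_ne_zero h
  refine ⟨t, hs, ?_⟩
  by_contra h0
  rw [coeff_smul', coeff_mono, if_neg h0, mul_zero] at ht
  exact ht rfl

theorem gen_coeff' {ι : Type} [Fintype ι] {k : ℕ} (X : ι → Fin k → ℚ) (c : ι → ℤ)
    (hX : Function.Injective X) (t : ι) :
    (∑ t, c t • mono (X t)).coeff (X t) = c t :=
  gen_coeff _ X c hX t (Finset.mem_univ t)

theorem gen_sub
{k : ℕ} (F G : CharRing k) (x : Fin k → ℚ) :
    (F - G).coeff x = F.coeff x - G.coeff x := by simp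

theorem DD_coeff (t : TI) : DD.coeff (XX t) = co t := by
  have h : DD = ∑ t : TI, co t • mono (XX t) := by rw [DD]
  rw [h]
  exact gen_coeff' XX co XX_inj t


theorem DD_supp (x : W8) (h : DD.coeff x ≠ 0) : ∃ t, XX t = x := by
  have h' : DD = ∑ t : TI, co t • mono (XX t) := by rw [DD]
  rw [h'] at h
  obtain ⟨t, -, ht⟩ := gen_supp Finset.univ XX co x h
  exact ⟨t, ht⟩

theorem DD_anti_of (s : W8 →+ W8) (hs : ∀ x, s (s x) = x)
    (h : ∀ t, ∃ t', s (XX t) = XX t' ∧ co t' = - co t) : mp s DD = - DD := by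
  choose g hg hc using h
  have hgg : Function.Involutive g := by
    intro t
    apply XX_inj
    rw [← hg, ← hg, hs]
  rw [DD, map_sum, ← Finset.sum_neg_distrib]
  rw [← Equiv.sum_comp hgg.toPerm (fun t => -(co t • mono (XX t)))]
  refine Finset.sum_congr rfl fun t _ => ?_
  rw [map_zsmul, mp_mono]
  simp only [Function.Involutive.coe_toPerm]
  rw [hg, hc, neg_smul, neg_neg]

theorem srefl_swap (x : W8) (j : Fin 7) (i i' : Fin 8) (hne : i ≠ i')
    (h : ip x (al j) = x i - x i') (ha : ∀ k, al j k = if k = i then 1 else if k = i' then -1 else 0) :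
    srefl (al j) x = x ∘ Equiv.swap i i' := by
  funext k
  rw [srefl_apply, h]
  simp only [Pi.sub_apply, Pi.smul_apply, smul_eq_mul, ha, Function.comp, Equiv.swap_apply_def]
  split_ifs with h1 h2
  · subst h1; ring
  · subst h2; ring
  · ring

theorem DD_swap (j : Fin 7) (i i' : Fin 8) (hne : i ≠ i')
    (h : ∀ x, ip x (al j) = x i - x i')
    (ha : ∀ k, al j k = if k = i then 1 else if k = i' then -1 else 0) :
    mp (srefl (al j)) DD = - DD := by
  apply DD_anti_of _ (srefl_invol (al_al j))
  rintro ⟨p, σ⟩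
  refine ⟨(p, σ * Equiv.swap i i'), ?_, ?_⟩
  · rw [srefl_swap _ j i i' hne (h _) ha]
    rfl
  · simp [co, Equiv.Perm.sign_swap hne]

theorem DD_anti (j : Fin 7) : mp (srefl (al j)) DD = - DD := by
  by_cases hj : j = 6
  · subst hj
    apply DD_anti_of _ (srefl_invol (al_al 6))
    rintro ⟨p, σ⟩
    obtain ⟨k, hk, p', τ, h1, h2⟩ := key p (vec (SR 6) ∘ σ.symm)
      (by
        intro i
        have : ∀ i, vec (SR 6) i = 1 ∨ vec (SR 6) i = -1 := by decide +kernel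
        exact this _)
      (by
        have : ∑ i, vec (SR 6) i = 0 := by decide +kernel
        rw [← this]
        exact Equiv.sum_comp σ.symm (vec (SR 6)))
    refine ⟨(p', τ * σ), ?_, ?_⟩
    · have e : ip (XX (p, σ)) (al 6) = k := by
        have e1 : ∑ i, N p (σ i) * vec (SR 6) i = 8 * k := by
          rw [← hk, ← Equiv.sum_comp σ (fun i => N p i * (vec (SR 6) ∘ σ.symm) i)]
          simp
        have e2 : ((∑ i, N p (σ i) * vec (SR 6) i : ℤ) : ℚ) = 8 * k := by rw [e1]; push_cast; rfl
        push_cast at e2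
        rw [ip]
        have : ∀ i, XX (p, σ) i * al 6 i = (N p (σ i) * vec (SR 6) i : ℚ) / 8 := by
          intro i; simp only [XX, qv, al, Function.comp]; ring
        simp only [this, ← Finset.sum_div, e2]
        ring
      rw [srefl_apply, e]
      funext i
      have h3 := congrFun h1 (σ i)
      simp only [Function.comp, Equiv.symm_apply_apply] at h3
      simp only [XX, qv, al, Function.comp, Pi.sub_apply, Pi.smul_apply, smul_eq_mul,
        Equiv.Perm.mul_apply, ← h3]
      push_cast; ring
    · simp only [co, Equiv.Perm.sign_mul, Units.val_mul]
      calc eps p' * ((Equiv.Perm.sign τ : ℤˣ) * (Equiv.Perm.sign σ : ℤˣ) : ℤ)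
          = ((Equiv.Perm.sign τ : ℤˣ) * eps p' : ℤ) * (Equiv.Perm.sign σ : ℤˣ) := by ring
        _ = _ := by rw [h2]; ring
  · have hj2 : (j : ℕ) < 6 := by
      have := j.2
      have h6 : (j : ℕ) ≠ 6 := fun h => hj (Fin.ext h)
      omega
    have hip := ip_al
    fin_cases j
    · exact DD_swap 0 0 1 (by decide) (fun x => (hip x).1)
        (fun k => by fin_cases k <;> simp [al, SR, vec])
    · exact DD_swap 1 1 2 (by decide) (fun x => (hip x).2.1)
        (fun k => by fin_cases k <;> simp [al, SR, vec])
    · exact DD_swap 2 2 3 (by decide) (fun x => (hip x).2.2.1)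
        (fun k => by fin_cases k <;> simp [al, SR, vec])
    · exact DD_swap 3 3 4 (by decide) (fun x => (hip x).2.2.2.1)
        (fun k => by fin_cases k <;> simp [al, SR, vec])
    · exact DD_swap 4 4 5 (by decide) (fun x => (hip x).2.2.2.2.1)
        (fun k => by fin_cases k <;> simp [al, SR, vec])
    · exact DD_swap 5 5 6 (by decide) (fun x => (hip x).2.2.2.2.2.1)
        (fun k => by fin_cases k <;> simp [al, SR, vec])
    · exact absurd rfl hj

def t0 : TI := ((true, 35), 1)

theorem XX_t0 : XX t0 = rho := by
  have : N (true, 35) = vec [33, 29, 25, 21, 17, 13, 9, -35] := by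
    rw [N, NL]
    exact congrArg vec LL_last
  rw [XX, rho, qvec, t0, this]
  rfl

theorem co_t0 : co t0 = 1 := by simp [co, t0, eps]

theorem XX_sq (t : TI) : ip (XX t) (XX t) = 4760 / 16 := by
  have h := N_sq t.1
  have h2 : ((∑ i, N t.1 i * N t.1 i : ℤ) : ℚ) = 4760 := by rw [h]; rfl
  push_cast at h2
  rw [← h2, ← Equiv.sum_comp t.2, Finset.sum_div, ip]
  refine Finset.sum_congr rfl fun i _ => ?_
  simp only [XX, qv, Function.comp]; ring

theorem XX_lt (t : TI) : XX t = rho ∨ ip (XX t) rho < ip rho rho := by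
  by_cases h : XX t = rho
  · exact Or.inl h
  · right
    have h1 := XX_sq t
    have h2 := XX_sq t0
    rw [XX_t0] at h2
    obtain ⟨i, hi⟩ := Function.ne_iff.1 h
    have h3 : 0 < ∑ i, (XX t i - rho i) * (XX t i - rho i) := by
      apply Finset.sum_pos' (fun i _ => mul_self_nonneg _)
      exact ⟨i, Finset.mem_univ _, mul_self_pos.2 (sub_ne_zero.2 hi)⟩
    have h4 : ∑ i, (XX t i - rho i) * (XX t i - rho i) =
        ip (XX t) (XX t) + ip rho rho - 2 * ip (XX t) rho := by
      simp only [ip, Finset.mul_sum, ← Finset.sum_add_distrib, ← Finset.sum_sub_distrib]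
      refine Finset.sum_congr rfl fun i _ => ?_
      ring
    linarith

theorem XX_sum (t : TI) : ∑ i, XX t i = 28 := by
  have h := N_sum t.1
  have h2 : ((∑ i, N t.1 i : ℤ) : ℚ) = 112 := by rw [h]; rfl
  push_cast at h2
  have : ∑ i, XX t i = (∑ i, (N t.1 i : ℚ)) / 4 := by
    rw [← Equiv.sum_comp t.2 (fun i => (N t.1 i : ℚ)), Finset.sum_div]; rfl
  rw [this, h2]; norm_num

theorem XX_int (t : TI) (j : Fin 7) : ∃ k : ℤ, ip (XX t) (al j) = k := by
  obtain ⟨p, σ⟩ := t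
  obtain ⟨a0, a1, a2, a3, a4, a5, a6⟩ := ip_al (XX (p, σ))
  have hd : ∀ i i', ∃ k : ℤ, XX (p, σ) i - XX (p, σ) i' = k := by
    intro i i'
    have h1 := N_mod p (σ i)
    have h2 := N_mod p (σ i')
    obtain ⟨k, hk⟩ : ∃ k, N p (σ i) - N p (σ i') = 4 * k :=
      ⟨(N p (σ i) - N p (σ i')) / 4, by omega⟩
    refine ⟨k, ?_⟩
    have hk' : ((N p (σ i) - N p (σ i') : ℤ) : ℚ) = 4 * k := by rw [hk]; push_cast; rfl
    push_cast at hk'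
    simp only [XX, qv, Function.comp]
    linarith
  fin_cases j
  · obtain ⟨k, hk⟩ := hd 0 1; exact ⟨k, a0.trans hk⟩
  · obtain ⟨k, hk⟩ := hd 1 2; exact ⟨k, a1.trans hk⟩
  · obtain ⟨k, hk⟩ := hd 2 3; exact ⟨k, a2.trans hk⟩
  · obtain ⟨k, hk⟩ := hd 3 4; exact ⟨k, a3.trans hk⟩
  · obtain ⟨k, hk⟩ := hd 4 5; exact ⟨k, a4.trans hk⟩
  · obtain ⟨k, hk⟩ := hd 5 6; exact ⟨k, a5.trans hk⟩
  · have hs := XX_sum (p, σ)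
    rw [Fin.sum_univ_eight] at hs
    have h0 := N_mod p (σ 0)
    have h1 := N_mod p (σ 1)
    have h2 := N_mod p (σ 2)
    have h3 := N_mod p (σ 7)
    obtain ⟨k, hk⟩ : ∃ k, N p (σ 0) + N p (σ 1) + N p (σ 2) + N p (σ 7) = 4 * k :=
      ⟨(N p (σ 0) + N p (σ 1) + N p (σ 2) + N p (σ 7)) / 4, by omega⟩
    refine ⟨14 - k, a6.trans ?_⟩
    have hk' : ((N p (σ 0) + N p (σ 1) + N p (σ 2) + N p (σ 7) : ℤ) : ℚ) = 4 * k := by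
      rw [hk]; push_cast; rfl
    push_cast at hk'
    have e : XX (p, σ) 0 + XX (p, σ) 1 + XX (p, σ) 2 + XX (p, σ) 7 = k := by
      simp only [XX, qv, Function.comp]
      linarith
    push_cast
    linarith

theorem XX_lat (t : TI) : XX t - rho ∈ Lat := by
  rw [← XX_t0]
  refine ⟨fun j => ?_, ?_⟩
  · obtain ⟨k, hk⟩ := XX_int t j
    obtain ⟨k', hk'⟩ := XX_int t0 j
    exact ⟨k - k', by rw [ip_sub, hk, hk']; push_cast; rfl⟩
  · simp only [Pi.sub_apply, Finset.sum_sub_distrib, XX_sum, sub_self]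

theorem srefl_half7 (j : Fin 7) : srefl (al j) half7 = half7 := by
  have : ip half7 (al j) = 0 := by
    obtain ⟨a0, a1, a2, a3, a4, a5, a6⟩ := ip_al half7
    fin_cases j
    · exact a0.trans (by simp [half7])
    · exact a1.trans (by simp [half7])
    · exact a2.trans (by simp [half7])
    · exact a3.trans (by simp [half7])
    · exact a4.trans (by simp [half7])
    · exact a5.trans (by simp [half7])
    · exact a6.trans (by simp only [half7]; norm_num)
  rw [srefl_apply, this]; simp

theorem weyl_denom : mono half7 * PR = DD := by
  rw [← sub_eq_zero]
  have hPR := PR_tri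
  have e : ∀ x : W8, x - half7 - (rho - half7) = x - rho := fun x => by abel
  apply unique_zero
  · intro j
    rw [map_sub, map_mul, mp_mono, srefl_half7, PR_anti, DD_anti]
    ring
  · intro x hx
    have hx' : (mono half7 * PR).coeff x - DD.coeff x ≠ 0 := by
      rw [gen_sub] at hx
      exact hx
    rw [coeff_mono_mul] at hx'
    have hxr : x ≠ rho := by
      rintro rfl
      apply hx'
      have h5 := DD_coeff t0
      rw [XX_t0, co_t0] at h5
      rw [hPR.1, h5, sub_self]
    by_cases
 h1 : DD.coeff x = 0
    · rw [h1, sub_zero] at hx'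
      obtain ⟨h2, h3⟩ := hPR.2 _ hx'
      rw [e] at h2
      refine ⟨h2, ?_⟩
      rcases h3 with h3 | h3
      · exact absurd (sub_left_inj.1 h3) hxr
      · simp only [ip_sub] at h3; linarith
    · obtain ⟨t, rfl⟩ := DD_supp x h1
      exact ⟨XX_lat t, (XX_lt t).resolve_left hxr⟩

theorem DD_eq : DD = ∑ p : Idx, eps p • altA 7 (qv (N p)) := by
  rw [DD, Fintype.sum_prod_type]
  refine Finset.sum_congr rfl fun p _ => ?_
  rw [altA, Finset.smul_sum]
  refine Finset.sum_congr rfl fun σ _ => ?_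
  rw [smul_smul]
  rfl

end Spin

namespace Spin

theorem mono_sum {k : ℕ} {ι : Type} (s : Finset ι) (f : ι → Fin k → ℚ) :
    ∏ i ∈ s, mono (f i) = mono (∑ i ∈ s, f i) := by
  classical
  induction s using Finset.induction_on with
  | empty => simp [mono_zero]
  | insert a s ha ih => rw [Finset.prod_insert ha, Finset.sum_insert ha, ih, mono_add]

theorem mono_pow {k : ℕ} (u : Fin k → ℚ) (n : ℕ) : mono u ^ n = mono ((n : ℚ) • u) := by
  induction n with
  | zero => simp [mono_zero]
  | succ n ih => rw [pow_succ, ih, mono_add]; congr 1; push_cast; module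

def ee (i : Fin 8) : W8 := fun k => if k = i then 1 else 0

theorem prod_flat {α : Type} (L : List α) (f : α → List (List ℤ)) (g : List ℤ → CharRing 8) :
    ((L.flatMap f).map g).prod = (L.map (fun a => ((f a).map g).prod)).prod := by
  induction L with
  | nil => simp
  | cons a L ih => simp [List.flatMap_cons, ih]

theorem prod_filt {α : Type} (L : List α) (q : α → Bool) (g : α → CharRing 8) :
    ((L.filter q).map g).prod = (L.map (fun a => if q a = true then g a else 1)).prod := by
  induction L with
  | nil => simp
  | cons a L ih =>
    rw [List.filter_cons]
    by_cases h : q a = true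
    · simp [h, ih]
    · simp [h, ih]

theorem RA_prod : (RA.map (fun l => bb (qvec l))).prod =
    ∏ i : Fin 8, ∏ j ∈ Finset.Ioi i, bb ((1 / 2 : ℚ) • (ee i - ee j)) := by
  rw [RA, prod_flat, Fin.prod_univ_def]
  refine congrArg List.prod (List.map_congr_left ?_)
  intro i _

  rw [List.map_map, prod_filt, ← Fin.prod_univ_def]
  have : Finset.Ioi i = Finset.univ.filter (fun j => i < j) := by ext; simp
  rw [this, Finset.prod_filter]
  refine Finset.prod_congr rfl fun j _ => ?_
  simp only [decide_eq_true_eq]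
  split_ifs with h
  · simp only [Function.comp, qvec, vec_ofFn]
    congr 1
    funext k
    simp only [qv, ee, Pi.smul_apply, Pi.sub_apply, smul_eq_mul]
    split_ifs with h1 h2 h2
    · exact absurd (h1.symm.trans h2) h.ne
    all_goals norm_num
  · rfl

theorem sum_roots (k : Fin 8) : ∑ i : Fin 8, ∑ j ∈ Finset.Ioi i,
    ((if k = i then (1 : ℤ) else 0) + (if k = j then 1 else 0)) = 7 := by
  revert k; decide +kernel

theorem vander : altA 7 (rhoA 7) = mono half7 * (RA.map (fun l => bb (qvec l))).prod := by
  have h1 : altA 7 (rhoA 7) = mono (fun _ => (7 : ℚ)) *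
      (Matrix.vandermonde (fun i : Fin 8 => mono (- ee i))).det := by
    rw [← Matrix.det_transpose, Matrix.det_apply', altA, Finset.mul_sum]
    refine Finset.sum_congr rfl fun σ _ => ?_
    simp only [Matrix.transpose_apply, Matrix.vandermonde_apply, mono_pow, mono_sum]
    rw [mul_left_comm, mono_add, zsmul_eq_mul]
    congr 2
    funext k
    simp only [rhoA, Pi.add_apply, Finset.sum_apply, Pi.smul_apply, Pi.neg_apply, ee, smul_eq_mul]
    rw [Finset.sum_eq_single k]
    · simp; ring
    · intro b _ hb
      simp [Ne.symm hb]
    · simp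
  rw [h1, Matrix.det_vandermonde, RA_prod]
  have h2 : ∀ i j, mono (-ee j) - mono (-ee i) =
      mono (-(1 / 2 : ℚ) • (ee i + ee j)) * bb ((1 / 2 : ℚ) • (ee i - ee j)) := by
    intro i j
    rw [bb, mul_sub, mono_add, mono_add]
    congr 2 <;> module
  simp only [h2, Finset.prod_mul_distrib, mono_sum]
  rw [← mul_assoc, mono_add]
  congr 2
  funext k
  have h3 := sum_roots k
  have h4 : ((∑ i : Fin 8, ∑ j ∈ Finset.Ioi i,
    ((if k = i then (1 : ℤ) else 0) + (if k = j then 1 else 0)) : ℤ) : ℚ) = 7 := by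
    rw [h3]; rfl
  push_cast at h4
  simp only [Pi.add_apply, Finset.sum_apply, Pi.smul_apply, ee, smul_eq_mul, ← Finset.mul_sum, h4,
    half7]
  norm_num

theorem main_id : altA 7 (rhoA 7) * (Vs.map (fun l => bb (qvec l))).prod =
    ∑ p : Idx, eps p • altA 7 (qv (N p)) := by
  rw [← DD_eq, ← weyl_denom, PR, RR, List.map_append, List.prod_append, vander, mul_assoc]

end Spin

namespace Spin

def bS (S : Finset (Fin 8)) (i : Fin 8) : ℤ := if i ∈ S then 1 else -1

def hv (b : Fin 8 → ℤ) : W8 := fun i => (b i : ℚ) / 2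

def P48 : Finset (Finset (Fin 8)) := Finset.powersetCard 4 Finset.univ

def C4 : CharRing 8 := ∑ S ∈ P48, mono (hv (bS S))

theorem hv_inj : Function.Injective hv := by
  intro x y h
  funext i
  have := congrFun h i
  simp only [hv] at this
  have h2 : (x i : ℚ) = y i := by linarith
  exact_mod_cast h2

theorem bS_inj : Function.Injective bS := by
  intro S S' h
  ext i
  have := congrFun h i
  simp only [bS] at this
  split_ifs at this <;> simp_all

theorem bS_sum (S : Finset (Fin 8)) : ∑ i, bS S i = 2 * S.card - 8 := by
  have h : ∀ i, bS S i = 2 * (if i ∈ S then 1 else 0) - 1 := by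
    intro i; rw [bS]; split_ifs <;> norm_num
  simp only [h, Finset.sum_sub_distrib, ← Finset.mul_sum]
  simp

def Good (x : W8) : Prop := ∃ b : Fin 8 → ℤ, (∀ i, b i = 1 ∨ b i = -1) ∧ ∑ i, b i = 0 ∧ hv b = x

theorem good_iff (x : W8) : Good x ↔ ∃ S ∈ P48, hv (bS S) = x := by
  constructor
  · rintro ⟨b, h1, h2, rfl⟩
    have e : bS (Finset.univ.filter (fun i => b i = 1)) = b := by
      funext i
      rw [bS]
      rcases h1 i with h | h <;> simp [h]
    refine ⟨Finset.univ.filter (fun i => b i = 1), ?_, by rw [e]⟩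
    have h3 := bS_sum (Finset.univ.filter (fun i => b i = 1))
    rw [e, h2] at h3
    rw [P48, Finset.mem_powersetCard]
    exact ⟨Finset.subset_univ _, by omega⟩
  · rintro ⟨S, hS, rfl⟩
    refine ⟨bS S, fun i => ?_, ?_, rfl⟩
    · rw [bS]; split_ifs <;> simp
    · rw [bS_sum, (Finset.mem_powersetCard.1 hS).2]; norm_num

open Classical in
theorem C4_coeff (x : W8) : C4.coeff x = if Good x then 1 else 0 := by
  have h : C4 = ∑ S ∈ P48, (1 : ℤ) • mono (hv (bS S)) := by simp only [one_smul]; rw [C4]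
  split_ifs with hg
  · obtain ⟨S, hS, rfl⟩ := (good_iff x).1 hg
    rw [h]
    exact gen_coeff P48 (fun S => hv (bS S)) (fun _ => 1) (hv_inj.comp bS_inj) S hS
  · by_contra h0
    rw [h] at h0
    obtain ⟨S, hS, h2⟩ := gen_supp P48 (fun S => hv (bS S)) (fun _ => 1) x h0
    exact hg ((good_iff x).2 ⟨S, hS, h2⟩)

theorem self_neg {k : ℕ} {F : CharRing k} (h : F = - F) : F = 0 := by
  apply AddMonoidAlgebra.ext
  ext x
  have h1 : F.coeff x = (-F).coeff x := by rw [← h]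
  have h2 : (-F).coeff x = - F.coeff x := by simp
  have : F.coeff x = 0 := by omega
  simpa using this

theorem altA_comp (r : ℕ) (x : Fin (r + 1) → ℚ) (τ : Equiv.Perm (Fin (r + 1))) :
    altA r (x ∘ τ) = ((Equiv.Perm.sign τ : ℤˣ) : ℤ) • altA r x := by
  rw [altA, altA, Finset.smul_sum]
  rw [← Equiv.sum_comp (Equiv.mulLeft τ) (fun σ =>
    ((Equiv.Perm.sign τ : ℤˣ) : ℤ) • ((Equiv.Perm.sign σ : ℤˣ) : ℤ) • mono (fun i => x (σ i)))]
  refine Finset.sum_congr rfl fun σ _ => ?_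
  simp only [Equiv.coe_mulLeft, Equiv.Perm.sign_mul, smul_smul, Units.val_mul, ← mul_assoc,
    Equiv.Perm.mul_apply, Function.comp]
  rw [← Units.val_mul, Int.units_mul_self]
  simp

theorem altA_sing (r : ℕ) (x : Fin (r + 1) → ℚ) (i j : Fin (r + 1)) (hij : i ≠ j)
    (h : x i = x j) : altA r x = 0 := by
  apply self_neg
  have h1 := altA_comp r x (Equiv.swap i j)
  have h2 : x ∘ Equiv.swap i j = x := by
    funext k
    simp only [Function.comp, Equiv.swap_apply_def]
    split_ifs with h3 h4
    · rw [h3, h]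
    · rw [h4, h]
    · rfl
  rw [h2, Equiv.Perm.sign_swap hij] at h1
  simpa using h1

theorem rhoA_inj (r : ℕ) : Function.Injective
    (fun σ : Equiv.Perm (Fin (r + 1)) => fun i => rhoA r (σ i)) := by
  intro σ τ h
  ext i
  have := congrFun h i
  simp only [rhoA] at this
  have h2 : ((σ i : ℕ) : ℚ) = (τ i : ℕ) := by linarith
  exact_mod_cast h2

theorem altA_rho_ne_gen (r : ℕ) : altA r (rhoA r) ≠ 0 := by
  intro h
  have h1 := gen_coeff' (fun σ : Equiv.Perm (Fin (r + 1)) => fun i => rhoA r (σ i))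
    (fun σ => ((Equiv.Perm.sign σ : ℤˣ) : ℤ)) (rhoA_inj r) 1
  rw [altA] at h
  rw [h] at h1
  simp at h1

theorem altA_rho_ne : altA 7 (rhoA 7) ≠ 0 := altA_rho_ne_gen 7

theorem sing48 : ∀ S ∈ P48, S = {0, 1, 2, 3} ∨ ∃ i : Fin 7, i.castSucc ∉ S ∧ i.succ ∈ S := by
  decide +kernel

theorem C4_mul : C4 * altA 7 (rhoA 7) = altA 7 (slWt 7 (e 7 4) + rhoA 7) := by
  have h1 : C4 * altA 7 (rhoA 7) = ∑ S ∈ P48, altA 7 (hv (bS S) + rhoA 7) := by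
    simp only [altA]
    rw [Finset.mul_sum, Finset.sum_comm]
    refine Finset.sum_congr rfl fun σ _ => ?_
    rw [C4, Finset.sum_mul]
    refine Finset.sum_bij (fun S _ => S.map σ.toEmbedding) ?_ ?_ ?_ ?_
    · intro S hS
      rw [P48, Finset.mem_powersetCard] at hS ⊢
      exact ⟨Finset.subset_univ _, by rw [Finset.card_map]; exact hS.2⟩
    · intro S _ S' _ h
      exact Finset.map_injective _ h
    · intro S hS
      refine ⟨S.map σ.symm.toEmbedding, ?_, ?_⟩
      · rw [P48, Finset.mem_powersetCard] at hS ⊢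
        exact ⟨Finset.subset_univ _, by rw [Finset.card_map]; exact hS.2⟩
      · ext i; simp [Finset.mem_map_equiv]
    · intro S _
      rw [mul_smul_comm, mono_add]
      congr 2
      funext i
      have : bS (S.map σ.toEmbedding) (σ i) = bS S i := by
        simp [bS]
      simp only [Pi.add_apply, hv, this]
  rw [h1, Finset.sum_eq_single {0, 1, 2, 3}]
  · congr 2
    funext i
    rw [slWt, partLift]
    have h4 : (∑ j : Fin 7, (((j : ℕ) : ℚ) + 1) * ((e 7 4 j : ℕ) : ℚ)) = 4 := by
      simp [Fin.sum_univ_succ, e]; norm_num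
    rw [h4]
    have h5 : (∑ j ∈ Finset.univ.filter (fun j : Fin 7 => (i : ℕ) ≤ (j : ℕ)), e 7 4 j) =
        if (i : ℕ) ≤ 3 then 1 else 0 := by
      revert i; decide +kernel
    rw [← Nat.cast_sum, h5]
    fin_cases i <;> simp [hv, bS] <;> norm_num
  · intro S hS hne
    rcases sing48 S hS with h | ⟨i, h2, h3⟩
    · exact absurd h hne
    · apply altA_sing 7 _ i.castSucc i.succ
      · exact (Fin.castSucc_lt_succ).ne
      · simp only [Pi.add_apply, hv, bS, h2, h3, rhoA, if_true, if_false, Fin.val_succ,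
          Fin.val_castSucc]
        push_cast; ring
  · intro h; exact absurd (by decide +kernel) h

theorem WtSys_eq {w : Fin 35 → W8} (hw : WtSys CType.D 35 7 (e 7 4) w) :
    ∑ i : Fin 35, (mono (w i) + mono (-(w i))) = C4 := by
  rw [WtSys, ← C4_mul] at hw
  have h := mul_right_cancel₀ altA_rho_ne hw
  simpa using h

end Spin

namespace Spin

theorem Good_coord {x : W8} (h : Good x) (i : Fin 8) : x i = 1 / 2 ∨ x i = -1 / 2 := by
  obtain ⟨b, h1, -, rfl⟩ := h
  rcases h1 i with h | h <;> simp [hv, h]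

theorem Good_neg {x : W8} (h : Good x) : Good (-x) := by
  obtain ⟨b, h1, h2, rfl⟩ := h
  refine ⟨fun i => - b i, fun i => ?_, by simp [h2], ?_⟩
  · rcases h1 i with h | h <;> simp [h]
  · funext i; simp only [hv, Pi.neg_apply]; push_cast; ring

theorem coeff_pm {w : Fin 35 → W8} (x : W8) :
    (∑ i : Fin 35, (mono (w i) + mono (-(w i)))).coeff x =
      ∑ i, ((if w i = x then 1 else 0) + (if -(w i) = x then 1 else 0) : ℤ) := by
  rw [coeff_sum']
  refine Finset.sum_congr rfl fun i _ => ?_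
  rw [← coeff_mono, ← coeff_mono]
  simp

theorem w_good {w : Fin 35 → W8} (H : ∑ i : Fin 35, (mono (w i) + mono (-(w i))) = C4)
    (i : Fin 35) : Good (w i) := by
  by_contra h
  have h1 := C4_coeff (w i)
  rw [if_neg h, ← H, coeff_pm] at h1
  have h2 := Finset.sum_eq_zero_iff_of_nonneg (s := Finset.univ) (f := fun j =>
    ((if w j = w i then 1 else 0) + (if -(w j) = w i then 1 else 0) : ℤ)) (by
      intro j _; split_ifs <;> norm_num)
  have h3 := h2.1 h1 i (Finset.mem_univ i)
  simp only [if_true] at h3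
  split_ifs at h3 <;> omega

def wp (w : Fin 35 → W8) (i : Fin 35) : W8 := if w i 7 = 1 / 2 then - w i else w i

def Vsw : List W8 := Vs.map (fun l => (2 : ℚ) • qvec l)

theorem two_qvec (b : Fin 8 → ℤ) : (2 : ℚ) • qvec (List.ofFn b) = hv b := by
  funext i
  simp only [qvec, vec_ofFn, qv, hv, Pi.smul_apply, smul_eq_mul]; ring

theorem mem_Vsw (x : W8) : x ∈ Vsw ↔ Good x ∧ x 7 = -1 / 2 := by
  rw [Vsw, List.mem_map]
  constructor
  · rintro ⟨l, hl, rfl⟩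
    obtain ⟨b, rfl, h1, h2, h3⟩ := mem_Vs hl
    rw [two_qvec]
    exact ⟨⟨b, h1, h2, rfl⟩, by simp [hv, h3]⟩
  · rintro ⟨⟨b, h1, h2, rfl⟩, h3⟩
    refine ⟨List.ofFn b, mem_Vs_of h1 h2 ?_, two_qvec b⟩
    simp only [hv] at h3
    have : (b 7 : ℚ) = -1 := by linarith
    exact_mod_cast this

theorem Vs_nodup : Vs.Nodup := by decide +kernel

theorem Vsw_nodup : Vsw.Nodup := by
  rw [Vsw]
  refine List.Nodup.map_on ?_ Vs_nodup
  intro l hl l' hl' h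
  obtain ⟨b, rfl, -⟩ := mem_Vs hl
  obtain ⟨b', rfl, -⟩ := mem_Vs hl'
  rw [two_qvec, two_qvec] at h
  rw [hv_inj h]

theorem wp_multiset {w : Fin 35 → W8} (H : ∑ i : Fin 35, (mono (w i) + mono (-(w i))) = C4) :
    Multiset.map (wp w) Finset.univ.val = (Vsw : Multiset W8) := by
  classical
  have hg := w_good H
  have hwp7 : ∀ i, wp w i 7 = -1 / 2 := by
    intro i
    rw [wp]
    rcases Good_coord (hg i) 7 with h | h
    · rw [if_pos h, Pi.neg_apply, h]; norm_num
    · rw [if_neg (by rw [h]; norm_num), h]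
  ext x
  rw [Multiset.coe_count, List.Nodup.count Vsw_nodup, Multiset.count_map]
  change (Finset.univ.filter (fun i => x = wp w i)).card = _
  by_cases hx : x 7 = -1 / 2
  · have h1 := C4_coeff x
    rw [← H, coeff_pm] at h1
    have h2 : ((Finset.univ.filter (fun i => x = wp w i)).card : ℤ) = if Good x then 1 else 0 := by
      rw [← h1, Finset.card_filter]
      push_cast
      refine Finset.sum_congr rfl fun i _ => ?_
      rw [wp]
      rcases Good_coord (hg i) 7 with h | h
      · rw [if_pos h, if_neg (c := w i = x), zero_add]
        · simp only [eq_comm]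
        · rintro rfl
          rw [h] at hx; norm_num at hx
      · rw [if_neg (c := w i 7 = 1 / 2) (by rw [h]; norm_num), if_neg (c := -w i = x), add_zero]
        · simp only [eq_comm]
        · rintro rfl
          rw [Pi.neg_apply, h] at hx; norm_num at hx
    by_cases hgx : Good x
    · rw [if_pos hgx] at h2
      rw [if_pos ((mem_Vsw x).2 ⟨hgx, hx⟩)]
      exact_mod_cast h2
    · rw [if_neg hgx] at h2
      rw [if_neg (fun h => hgx ((mem_Vsw x).1 h).1)]
      exact_mod_cast h2
  · rw [if_neg (fun h => hx ((mem_Vsw x).1 h).2), Finset.card_eq_zero, Finset.filter_eq_empty_iff]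
    intro i _ h
    exact hx (by rw [h]; exact hwp7 i)

def Mw (w : Fin 35 → W8) : ℕ := (Finset.univ.filter (fun i => w i 7 = 1 / 2)).card

theorem w_prod {w : Fin 35 → W8} (H : ∑ i : Fin 35, (mono (w i) + mono (-(w i))) = C4) :
    ∏ i, bb ((1 / 2 : ℚ) • w i) = (-1) ^ (Mw w) * (Vs.map (fun l => bb (qvec l))).prod := by
  have h1 : ∏ i, bb ((1 / 2 : ℚ) • wp w i) = (Vs.map (fun l => bb (qvec l))).prod := by
    have h2 := congrArg (fun m => (Multiset.map (fun x => bb ((1 / 2 : ℚ) • x)) m).prod)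
      (wp_multiset H)
    simp only [Multiset.map_map, Vsw, Multiset.map_coe, List.map_map, Multiset.prod_coe] at h2
    have e : ∀ l, bb ((1 / 2 : ℚ) • (2 : ℚ) • qvec l) = bb (qvec l) := by
      intro l
      congr 1
      module
    rw [Finset.prod]
    refine h2.trans ?_
    refine congrArg List.prod (List.map_congr_left ?_)
    intro l _
    exact e l
  rw [← h1, Mw, Finset.card_filter, ← Finset.prod_pow_eq_pow_sum, ← Finset.prod_mul_distrib]
  refine Finset.prod_congr rfl fun i _ => ?_
  rw [wp]
  split_ifs with h
  · rw [smul_neg, bb_neg]; ring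
  · simp

end Spin

namespace Spin

def sg (b : Bool) : ℤ := if b then -1 else 1

theorem sg_xor (a b : Bool) : sg (xor a b) = sg a * sg b := by cases a <;> cases b <;> rfl

theorem sg_sq (a : Bool) : sg a * sg a = 1 := by cases a <;> rfl

def chi {n : ℕ} (s : Fin n → Bool) : ℤ := ∏ i, sg (s i)

theorem chi_eq {n : ℕ} (s : Fin n → Bool) :
    chi s = (-1) ^ (Finset.univ.filter (fun i => s i = true)).card := by
  rw [chi, Finset.card_filter, ← Finset.prod_pow_eq_pow_sum]
  refine Finset.prod_congr rfl fun i _ => ?_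
  rw [sg]; split_ifs <;> simp

theorem chi_pm {n : ℕ} (s : Fin n → Bool) : chi s = 1 ∨ chi s = -1 := by
  rw [chi_eq]; exact neg_one_pow_eq_or ℤ _

theorem chi_xor {n : ℕ} (s t : Fin n → Bool) :
    chi (fun i => xor (s i) (t i)) = chi s * chi t := by
  simp only [chi, sg_xor, Finset.prod_mul_distrib]

theorem chi_comp {n : ℕ} (s : Fin n → Bool) (σ : Equiv.Perm (Fin n)) :
    chi (fun i => s (σ i)) = chi s :=
  Equiv.prod_comp σ (fun i => sg (s i))

def evS (n : ℕ) : Finset (Fin n → Bool) := Finset.univ.filter (fun s => chi s = 1)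

theorem mem_evS {n : ℕ} {s : Fin n → Bool} : s ∈ evS n ↔ chi s = 1 := by simp [evS]

def act {n : ℕ} (σ : Equiv.Perm (Fin n)) (s : Fin n → Bool) (v : Fin n → ℚ) : Fin n → ℚ :=
  fun k => (sg (s k) : ℚ) * v (σ k)

def hf {n : ℕ} (s : Fin n → Bool) : Fin n → ℚ := fun k => (sg (s k) : ℚ) * (1 / 2)

theorem altY_eq (n : ℕ) (v : Fin n → ℚ) : altY CType.D n v =
    ∑ σ : Equiv.Perm (Fin n), ∑ s ∈ evS n, ((Equiv.Perm.sign σ : ℤˣ) : ℤ) • mono (act σ s v) := by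
  rw [altY]
  refine Finset.sum_congr rfl fun σ _ => ?_
  rw [evS, Finset.sum_filter]
  refine Finset.sum_congr rfl fun s _ => ?_
  rw [← chi_eq]
  have h1 : chi s = 1 ↔ Even (Finset.univ.filter (fun i => s i = true)).card := by
    rw [chi_eq, neg_one_pow_eq_one_iff_even (by norm_num)]
  by_cases h : chi s = 1
  · rw [if_pos h, if_neg (by rw [← h1]; tauto), h, mul_one]
    congr 2
    funext k
    simp only [act, sg]
    push_cast
    rfl
  · rw [if_neg h, if_pos ⟨rfl, by rwa [← h1]⟩]

def hsp (n : ℕ) : CharRing n := ∑ s ∈ evS n, mono (hf s)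

theorem altY_mul (n : ℕ) (v : Fin n → ℚ) :
    altY CType.D n v * hsp n = ∑ t ∈ evS n, altY CType.D n (hf t + v) := by
  simp only [altY_eq]
  rw [Finset.sum_mul, Finset.sum_comm]
  refine Finset.sum_congr rfl fun σ _ => ?_
  rw [Finset.sum_mul, Finset.sum_comm]
  refine Finset.sum_congr rfl fun s hs => ?_
  rw [hsp, Finset.mul_sum]
  rw [mem_evS] at hs
  refine Finset.sum_bij (fun t _ => fun k => xor (s (σ.symm k)) (t (σ.symm k))) ?_ ?_ ?_ ?_
  · intro t ht
    rw [mem_evS] at ht ⊢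
    rw [chi_comp (fun k => xor (s k) (t k)) σ.symm, chi_xor, hs, ht]; rfl
  · intro t _ t' _ h
    funext k
    have := congrFun h (σ k)
    simpa using this
  · intro t ht
    refine ⟨fun k => xor (s k) (t (σ k)), ?_, ?_⟩
    · rw [mem_evS] at ht ⊢
      rw [chi_xor, chi_comp, hs, ht]; rfl
    · funext k; simp
  · intro t _
    rw [smul_mul_assoc, mono_add]
    congr 2
    funext k
    simp only [act, hf, Pi.add_apply, Equiv.symm_apply_apply, sg_xor]
    have := sg_sq (s k)
    have h2 : (sg (s k) : ℚ) * sg (s k) = 1 := by exact_mod_cast this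
    push_cast
    linear_combination (-(sg (t k) : ℚ) * (1 / 2)) * h2

/-- reflection invariance: if acting by a signed permutation with odd sign fixes `v`. -/
theorem altY_sing (n : ℕ) (v : Fin n → ℚ) (τ : Equiv.Perm (Fin n)) (u : Fin n → Bool)
    (hu : chi u = 1) (hτ : Equiv.Perm.sign τ = -1) (h : act τ u v = v) :
    altY CType.D n v = 0 := by
  apply self_neg
  conv_lhs => rw [altY_eq]
  rw [altY_eq, ← Finset.sum_neg_distrib]
  rw [← Equiv.sum_comp (Equiv.mulLeft τ) (fun σ : Equiv.Perm (Fin n) =>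
    - ∑ s ∈ evS n, ((Equiv.Perm.sign σ : ℤˣ) : ℤ) • mono (act σ s v))]
  refine Finset.sum_congr rfl fun σ _ => ?_
  rw [← Finset.sum_neg_distrib]
  refine Finset.sum_bij (fun s _ => fun k => xor (s k) (u (σ k))) ?_ ?_ ?_ ?_
  · intro s hs
    rw [mem_evS] at hs ⊢
    rw [chi_xor, chi_comp, hs, hu]; rfl
  · intro t _ t' _ h
    funext k
    have := congrFun h k
    simpa using this
  · intro s hs
    refine ⟨fun k => xor (s k) (u (σ k)), ?_, ?_⟩
    · rw [mem_evS] at hs ⊢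
      rw [chi_xor, chi_comp, hs, hu]; rfl
    · funext k; simp
  · intro s _
    simp only [Equiv.coe_mulLeft, Equiv.Perm.sign_mul, hτ]
    have : act (τ * σ) (fun k => xor (s k) (u (σ k))) v = act σ s v := by
      funext k
      have h1 := congrFun h (σ k)
      simp only [act] at h1
      simp only [act, sg_xor, Equiv.Perm.mul_apply]
      rw [← h1]
      push_cast; ring
    rw [this]
    simp

theorem altY_sing1 (n : ℕ) (v : Fin n → ℚ) (i j : Fin n) (hij : i ≠ j) (h : v i = v j) :
    altY CType.D n v = 0 := by
  apply altY_sing n v (Equiv.swap i j) (fun _ => false)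
  · simp [chi, sg]
  · exact Equiv.Perm.sign_swap hij
  · funext k
    simp only [act, sg, Equiv.swap_apply_def]
    split_ifs with h1 h2 h2 <;> simp_all

theorem altY_sing2 (n : ℕ) (v : Fin n → ℚ) (i j : Fin n) (hij : i ≠ j) (h : v i = - v j) :
    altY CType.D n v = 0 := by
  apply altY_sing n v (Equiv.swap i j) (fun k => decide (k = i ∨ k = j))
  · rw [chi_eq]
    have : (Finset.univ.filter (fun k => decide (k = i ∨ k = j) = true)) = {i, j} := by
      ext k; simp
    rw [this, Finset.card_pair hij]; rfl
  · exact Equiv.Perm.sign_swap hij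
  · funext k
    simp only [act, sg, Equiv.swap_apply_def, decide_eq_true_eq]
    by_cases h1 : k = i
    · subst h1; simp [h]
    · by_cases h2 : k = j
      · subst h2; simp [h1, h]
      · simp [h1, h2]

theorem sing_exists (n : ℕ) (t : Fin n → Bool) (ht : chi t = 1) (h0 : ∃ i, t i = true) :
    (∃ i j : Fin n, (j : ℕ) = i + 1 ∧ t i = true ∧ t j = false) ∨
    (∃ i j : Fin n, (j : ℕ) = i + 1 ∧ (j : ℕ) + 1 = n ∧ t i = true ∧ t j = true) := by
  by_contra hcon
  push Not at hcon
  obtain ⟨h1, h2⟩ := hcon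
  have hmono : ∀ d : ℕ, ∀ i j : Fin n, (j : ℕ) = i + d → t i = true → t j = true := by
    intro d
    induction d with
    | zero => intro i j h hi; rw [show j = i from Fin.ext (by omega)]; exact hi
    | succ d ih =>
      intro i j h hi
      have hlt : (i : ℕ) + d < n := by have := j.2; omega
      have h3 := ih i ⟨i + d, hlt⟩ rfl hi
      have := h1 ⟨i + d, hlt⟩ j (by simp; omega) h3
      simpa using this
  obtain ⟨i0, hi0⟩ := h0
  have hn : n - 1 < n := by have := i0.2; omega
  have hlast : t ⟨n - 1, hn⟩ = true :=
    hmono (n - 1 - i0) i0 _ (by have := i0.2; simp; omega) hi0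
  have honly : ∀ i, i ≠ (⟨n - 1, hn⟩ : Fin n) → t i = false := by
    intro i hi
    by_contra hti
    have hti' : t i = true := by simpa using hti
    have hin : (i : ℕ) < n - 1 := by
      have := i.2
      have h5 : (i : ℕ) ≠ n - 1 := fun h => hi (Fin.ext h)
      omega
    have h4 := hmono (n - 2 - i) i ⟨n - 2, by omega⟩ (by simp; omega) hti'
    exact h2 ⟨n - 2, by omega⟩ ⟨n - 1, hn⟩ (by simp; omega) (by simp; omega) h4 hlast
  have : chi t = -1 := by
    rw [chi, Finset.prod_eq_single ⟨n - 1, hn⟩]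
    · rw [hlast]; rfl
    · intro b _ hb; rw [honly b hb]; rfl
    · simp
  omega

theorem hsp_mul (n : ℕ) : altY CType.D n (rhoY CType.D n) * hsp n =
    altY CType.D n (hf (fun _ => false) + rhoY CType.D n) := by
  rw [altY_mul, Finset.sum_eq_single (fun _ => false)]
  · intro t ht hne
    rw [mem_evS] at ht
    have h0 : ∃ i, t i = true := by
      by_contra h
      push Not at h
      exact hne (funext fun i => by simpa using h i)
    rcases sing_exists n t ht h0 with ⟨i, j, hij, h1, h2⟩ | ⟨i, j, hij, hj, h1, h2⟩
    · apply altY_sing1 n _ i j (fun h => by rw [h] at hij; omega)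
      simp only [Pi.add_apply, hf, rhoY, h1, h2, hij, sg]
      push_cast
      norm_num; ring
    · apply altY_sing2 n _ i j (fun h => by rw [h] at hij; omega)
      have hn : (n : ℚ) = (i : ℕ) + 2 := by
        have : n = (i : ℕ) + 2 := by omega
        exact_mod_cast this

      simp only [Pi.add_apply, hf, rhoY, h1, h2, hij, sg, hn]
      push_cast
      norm_num; ring
  · intro h
    exact absurd (mem_evS.2 (by simp [chi, sg])) h

theorem sg_abs (b : Bool) : |(sg b : ℚ)| = 1 := by cases b <;> simp [sg]

theorem altY_rho_ne (n : ℕ) : altY CType.D n (rhoY CType.D n) ≠ 0 := by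
  intro h
  set ρ := rhoY CType.D n with hρ
  have hpos : ∀ i, 0 ≤ ρ i := by
    intro i
    simp only [hρ, rhoY]
    have : ((i : ℕ) : ℚ) + 1 ≤ n := by exact_mod_cast i.2
    linarith
  have hone : ∀ σ s, act σ s ρ = ρ → σ = 1 := by
    intro σ s h
    ext i
    have h1 := congrArg (fun x => |x|) (congrFun h i)
    simp only [act, abs_mul, sg_abs, one_mul, abs_of_nonneg (hpos _)] at h1
    simp only [hρ, rhoY] at h1
    have h2 : ((σ i : ℕ) : ℚ) = (i : ℕ) := by linarith
    simpa using (by exact_mod_cast h2 : (σ i : ℕ) = i)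
  have h1 : (altY CType.D n ρ).coeff ρ = 0 := by rw [h]; simp
  rw [altY_eq, coeff_sum'] at h1
  simp only [coeff_sum', coeff_smul', coeff_mono] at h1
  have hnn : ∀ σ : Equiv.Perm (Fin n), ∀ s, 0 ≤ ((Equiv.Perm.sign σ : ℤˣ) : ℤ) *
      (if act σ s ρ = ρ then 1 else 0) := by
    intro σ s
    split_ifs with h
    · rw [hone σ s h]; simp
    · simp
  have h2 := (Finset.sum_eq_zero_iff_of_nonneg (fun σ _ =>
    Finset.sum_nonneg fun s _ => hnn σ s)).1 h1 1 (Finset.mem_univ _)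
  have h3 := (Finset.sum_eq_zero_iff_of_nonneg (fun s _ => hnn 1 s)).1 h2 (fun _ => false)
    (mem_evS.2 (by simp [chi, sg]))
  rw [if_pos (by funext k; simp [act, sg])] at h3
  simp at h3

theorem epsWt_eq : epsWt CType.D 35 (e 35 35) = hf (fun _ => false) := by
  funext i
  simp only [epsWt, hf, sg]
  have h5 : (∑ j ∈ Finset.univ.filter (fun j : Fin 35 => (i : ℕ) ≤ (j : ℕ)), e 35 35 j) = 1 := by
    revert i; decide +kernel
  rw [← Nat.cast_sum, h5]
  simp [cval, e]; norm_num

theorem spin_char {f : CharRing 35} (hf : IsCharY CType.D 35 (e 35 35) f) : f = hsp 35 := by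
  rw [IsCharY, epsWt_eq, ← hsp_mul] at hf
  exact mul_left_cancel₀ (altY_rho_ne 35) hf

end Spin

namespace Spin

def Cl (c : ℤ) (F : CharRing 8) : Prop :=
  ∀ x, F.coeff x ≠ 0 → ∃ m : ℤ, 4 * x 7 = m ∧ m % 4 = (2 - c) % 4

theorem Cl_sub {c : ℤ} {F G : CharRing 8} (hF : Cl c F) (hG : Cl c G) : Cl c (F - G) := by
  intro x hx
  rw [gen_sub] at hx
  by_cases h : F.coeff x = 0
  · exact hG x (by rw [h] at hx; intro h2; rw [h2] at hx; exact hx rfl)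
  · exact hF x h

theorem Cl_sum {c : ℤ} {ι : Type} (s : Finset ι) (F : ι → CharRing 8) (h : ∀ i ∈ s, Cl c (F i)) :
    Cl c (∑ i ∈ s, F i) := by
  intro x hx
  rw [coeff_sum'] at hx
  obtain ⟨i, hi, h2⟩ := Finset.exists_ne_zero_of_sum_ne_zero hx
  exact h i hi x h2

theorem Cl_smul {c : ℤ} (a : ℤ) {F : CharRing 8} (h : Cl c F) : Cl c (a • F) := by
  intro x hx
  rw [coeff_smul'] at hx
  exact h x (right_ne_zero_of_mul hx)

theorem Cl_mono {c : ℤ} (u : W8) (h : ∃ m : ℤ, 4 * u 7 = m ∧ m % 4 = (2 - c) % 4) :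
    Cl c (mono u) := by
  intro x hx
  rw [coeff_mono] at hx
  split_ifs at hx with h2
  · rw [← h2]; exact h
  · exact absurd rfl hx

theorem Cl_uniq {F G : CharRing 8} (hF : Cl 1 F) (hG : Cl (-1) G) (h : F = G) : F = 0 := by
  apply AddMonoidAlgebra.ext
  ext x
  by_contra h0
  have h1 : F.coeff x ≠ 0 := by simpa using h0
  obtain ⟨m, h2, h3⟩ := hF x h1
  rw [h] at h1
  obtain ⟨m', h4, h5⟩ := hG x h1
  rw [h2] at h4
  have : m = m' := by exact_mod_cast h4
  subst this
  omega

def SA (c : Bool) : CharRing 8 := ∑ k : Fin 36, altA 7 (qv (N (c, k)))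

theorem SA_Cl (c : Bool) : Cl (bif c then 1 else -1) (SA c) := by
  refine Cl_sum _ _ fun k _ => ?_
  rw [altA]
  refine Cl_sum _ _ fun σ _ => Cl_smul _ (Cl_mono _ ⟨N (c, k) (σ 7), ?_, ?_⟩)
  · simp only [qv]; ring
  · have := N_mod (c, k) (σ 7)
    cases c
    · simpa using this
    · simpa using this

theorem eps_split (h : CharRing 8) (hh : h = ∑ p : Idx, eps p • altA 7 (qv (N p))) :
    h = SA true - SA false := by
  rw [hh, Fintype.sum_prod_type, Fintype.sum_bool]
  simp [eps, SA, Finset.sum_neg_distrib, sub_eq_add_neg]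

def Lw (w : Fin 35 → W8) : (Fin 35 → ℚ) →+ W8 where
  toFun v := ∑ i, v i • w i
  map_zero' := by simp
  map_add' x y := by simp [add_smul, Finset.sum_add_distrib]

theorem resChar_eq (w : Fin 35 → W8) (F : CharRing 35) : resChar w F = mp (Lw w) F := by
  rw [resChar, mp, AddMonoidAlgebra.mapDomainRingHom_apply]
  rfl

def uw {n : ℕ} (w : Fin n → W8) (s : Fin n → Bool) : W8 := ∑ i, hf s i • w i

def odS (n : ℕ) : Finset (Fin n → Bool) := Finset.univ.filter (fun s => ¬ chi s = 1)

theorem res_hsp (w : Fin 35 → W8) : resChar w (hsp 35) = ∑ s ∈ evS 35, mono (uw w s) := by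
  rw [resChar_eq, hsp, map_sum]
  refine Finset.sum_congr rfl fun s _ => ?_
  rw [mp_mono]; rfl

theorem prod_bb {n : ℕ} (w : Fin n → W8) : ∏ i, bb ((1 / 2 : ℚ) • w i) =
    ∑ s : Fin n → Bool, chi s • mono (∑ i, hf s i • w i) := by
  have h1 : ∀ i, bb ((1 / 2 : ℚ) • w i) =
      ∑ b : Bool, sg b • mono (((sg b : ℚ) * (1 / 2)) • w i) := by
    intro i
    rw [Fintype.sum_bool, bb]
    simp [sg]
    abel
  simp only [h1]
  rw [Finset.prod_univ_sum, Fintype.piFinset_univ]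
  refine Finset.sum_congr rfl fun s _ => ?_
  rw [Finset.prod_smul, mono_sum]
  rfl

theorem mem_odS {n : ℕ} {s : Fin n → Bool} (h : s ∈ odS n) : chi s = -1 := by
  rw [odS, Finset.mem_filter] at h
  exact (chi_pm s).resolve_left h.2

theorem prod_bb' {n : ℕ} (w : Fin n → W8) : ∏ i, bb ((1 / 2 : ℚ) • w i) =
    ∑ s ∈ evS n, mono (uw w s) - ∑ s ∈ odS n, mono (uw w s) := by
  rw [prod_bb, ← Finset.sum_filter_add_sum_filter_not _ (fun s => chi s = 1), sub_eq_add_neg,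
    ← Finset.sum_neg_distrib]
  congr 1
  · refine Finset.sum_congr rfl fun s hs => ?_
    rw [(Finset.mem_filter.1 hs).2, one_smul]; rfl
  · refine Finset.sum_congr rfl fun s hs => ?_
    rw [(chi_pm s).resolve_left (Finset.mem_filter.1 hs).2, neg_smul, one_smul]; rfl

theorem pm_sum {ι : Type} (s : Finset ι) (a : ι → ℤ) (h : ∀ i ∈ s, a i = 1 ∨ a i = -1) :
    (∏ i ∈ s, a i = 1 ∨ ∏ i ∈ s, a i = -1) ∧
    (∑ i ∈ s, a i) % 4 = (s.card - 1 + ∏ i ∈ s, a i) % 4 := by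
  classical
  induction s using Finset.induction_on with
  | empty => simp
  | insert j s hj ih =>
    obtain ⟨h1, h2⟩ := ih fun i hi => h i (Finset.mem_insert_of_mem hi)
    rw [Finset.prod_insert hj, Finset.sum_insert hj, Finset.card_insert_of_notMem hj]
    rcases h j (Finset.mem_insert_self j s) with h3 | h3 <;> rcases h1 with h4 | h4 <;>
      rw [h4] at h2 ⊢ <;> rw [h3] <;> refine ⟨by norm_num, ?_⟩ <;> push_cast <;> omega

theorem uw_Cl {w : Fin 35 → W8} (hg : ∀ i, Good (w i)) (s : Fin 35 → Bool) :
    ∃ m : ℤ, 4 * uw w s 7 = m ∧ m % 4 = (2 - chi s * (-1) ^ (Mw w)) % 4 := by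
  have ha : ∀ i, ∃ a : ℤ, (a = 1 ∨ a = -1) ∧ w i 7 = (a : ℚ) / 2 ∧
      a = - (-1) ^ (if w i 7 = 1 / 2 then 1 else 0) := by
    intro i
    rcases Good_coord (hg i) 7 with h | h
    · exact ⟨1, Or.inl rfl, by rw [h]; norm_num, by rw [if_pos h]; norm_num⟩
    · exact ⟨-1, Or.inr rfl, by rw [h]; norm_num, by rw [if_neg (by rw [h]; norm_num)]; norm_num⟩
  choose a ha1 ha2 ha3 using ha
  have h := pm_sum Finset.univ (fun i => sg (s i) * a i) (by
    intro i _
    rcases ha1 i with h | h <;> cases hs : s i <;> simp [h, sg])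
  refine ⟨∑ i, sg (s i) * a i, ?_, ?_⟩
  · simp only [uw, Finset.sum_apply, Pi.smul_apply, smul_eq_mul, hf, ha2]
    push_cast
    rw [Finset.mul_sum]
    refine Finset.sum_congr rfl fun i _ => ?_
    ring
  · rw [h.2, Finset.prod_mul_distrib]
    have h3 : ∏ i, a i = - (-1) ^ (Mw w) := by
      rw [Finset.prod_congr rfl fun i _ => ha3 i, Mw, Finset.card_filter,
        ← Finset.prod_pow_eq_pow_sum, Finset.prod_neg]
      simp
    rw [h3]
    change ((Fintype.card (Fin 35) : ℤ) - 1 + chi s * _) % 4 = _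
    rw [Fintype.card_fin]
    rcases chi_pm s with h4 | h4 <;> rcases neg_one_pow_eq_or ℤ (Mw w) with h5 | h5 <;>
      rw [h4, h5] <;> norm_num

theorem Cl_mul_rho {c : ℤ} {n : ℕ} (S : Finset (Fin n → Bool)) (u : (Fin n → Bool) → W8)
    (h : ∀ s ∈ S, ∃ m : ℤ, 4 * u s 7 = m ∧ m % 4 = (2 - c) % 4) :
    Cl c ((∑ s ∈ S, mono (u s)) * altA 7 (rhoA 7)) := by
  rw [Finset.sum_mul]
  refine Cl_sum _ _ fun s hs => ?_
  rw [altA, Finset.mul_sum]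
  refine Cl_sum _ _ fun σ _ => ?_
  rw [mul_smul_comm, mono_add]
  refine Cl_smul _ (Cl_mono _ ?_)
  obtain ⟨m, h1, h2⟩ := h s hs
  refine ⟨m + 4 * (7 - ((σ 7 : ℕ) : ℤ)), ?_, by omega⟩
  rw [Pi.add_apply, mul_add, h1, rhoA]
  push_cast; ring

theorem Cl_ev {c : ℤ} {n : ℕ} (u : (Fin n → Bool) → W8)
    (h : ∀ s, chi s = 1 → ∃ m : ℤ, 4 * u s 7 = m ∧ m % 4 = (2 - c) % 4) :
    Cl c ((∑ s ∈ evS n, mono (u s)) * altA 7 (rhoA 7)) :=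
  Cl_mul_rho _ u fun s hs => h s (mem_evS.1 hs)

theorem Cl_od {c : ℤ} {n : ℕ} (u : (Fin n → Bool) → W8)
    (h : ∀ s, chi s = -1 → ∃ m : ℤ, 4 * u s 7 = m ∧ m % 4 = (2 - c) % 4) :
    Cl c ((∑ s ∈ odS n, mono (u s)) * altA 7 (rhoA 7)) :=
  Cl_mul_rho _ u fun s hs => h s (mem_odS hs)

theorem decomp_main {w : Fin 35 → W8} (hw : WtSys CType.D 35 7 (e 7 4) w) :
    ∃ c : Bool, resChar w (hsp 35) * altA 7 (rhoA 7) = SA c := by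
  have H := WtSys_eq hw
  have hg := w_good H
  have h1 := w_prod H
  rw [prod_bb'] at h1
  have h2 := eps_split _ main_id
  have h3 : (∑ s ∈ evS 35, mono (uw w s)) * altA 7 (rhoA 7) -
      (∑ s ∈ odS 35, mono (uw w s)) * altA 7 (rhoA 7) =
      (-1) ^ (Mw w) * (SA true - SA false) := by
    rw [← sub_mul, h1, ← h2]; ring
  have hev : Cl ((-1) ^ (Mw w)) ((∑ s ∈ evS 35, mono (uw w s)) * altA 7 (rhoA 7)) := by
    apply Cl_ev
    intro s h4
    have := uw_Cl hg s
    rwa [h4, one_mul] at this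

  have hod : Cl (-(-1) ^ (Mw w)) ((∑ s ∈ odS 35, mono (uw w s)) * altA 7 (rhoA 7)) := by
    apply Cl_od
    intro s h4
    have := uw_Cl hg s
    rwa [h4, neg_one_mul] at this
  rw [res_hsp]
  have ht := SA_Cl true
  have hf := SA_Cl false
  simp only [cond_true, cond_false] at ht hf
  rcases Nat.even_or_odd (Mw w) with hM | hM
  · refine ⟨true, ?_⟩
    rw [hM.neg_one_pow] at h3 hev hod
    rw [← sub_eq_zero]
    apply Cl_uniq (Cl_sub hev ht) (Cl_sub hod hf)
    linear_combination h3
  · refine ⟨false, ?_⟩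
    rw [hM.neg_one_pow] at h3 hev hod
    rw [neg_neg] at hod
    rw [← sub_eq_zero]
    have : (∑ s ∈ odS 35, mono (uw w s)) * altA 7 (rhoA 7) - SA true =
      (∑ s ∈ evS 35, mono (uw w s)) * altA 7 (rhoA 7) - SA false := by linear_combination -h3
    rw [← this]
    exact Cl_uniq (Cl_sub hod ht) (Cl_sub hev hf) this

end Spin

namespace Spin

def mu (c : Bool) (k : Fin 36) : Fin 7 → ℕ := fun j =>
  ((N (c, k) j.castSucc - N (c, k) j.succ) / 4 - 1).toNat

theorem mu_spec (c : Bool) (k : Fin 36) (j : Fin 7) :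
    ((N (c, k) j.castSucc : ℤ) : ℚ) - ((N (c, k) j.succ : ℤ) : ℚ) = 4 * ((mu c k j : ℚ) + 1) := by
  have h1 := N_mod (c, k) j.castSucc
  have h2 := N_mod (c, k) j.succ
  have h3 := N_anti (c, k) (Fin.castSucc_lt_succ (i := j))
  have h4 : N (c, k) j.castSucc - N (c, k) j.succ = 4 * ((mu c k j : ℤ) + 1) := by
    rw [mu]; omega
  exact_mod_cast h4

theorem partLift_seven (d : Fin 7 → ℕ) :
    partLift 7 d 0 = d 0 + d 1 + d 2 + d 3 + d 4 + d 5 + d 6 ∧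
    partLift 7 d 1 = d 1 + d 2 + d 3 + d 4 + d 5 + d 6 ∧
    partLift 7 d 2 = d 2 + d 3 + d 4 + d 5 + d 6 ∧
    partLift 7 d 3 = d 3 + d 4 + d 5 + d 6 ∧
    partLift 7 d 4 = d 4 + d 5 + d 6 ∧
    partLift 7 d 5 = d 5 + d 6 ∧
    partLift 7 d 6 = d 6 ∧
    partLift 7 d 7 = 0 := by
  simp only [partLift, Finset.sum_filter, Fin.sum_univ_seven]
  simp

theorem slWt_mu (c : Bool) (k : Fin 36) : slWt 7 (mu c k) + rhoA 7 = qv (N (c, k)) := by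
  have hs := N_sum (c, k)
  have hs' : ((∑ i, N (c, k) i : ℤ) : ℚ) = 112 := by rw [hs]; rfl
  push_cast at hs'
  rw [Fin.sum_univ_eight] at hs'
  obtain ⟨p0, p1, p2, p3, p4, p5, p6, p7⟩ := partLift_seven (mu c k)
  have h0 := mu_spec c k 0
  have h1 := mu_spec c k 1
  have h2 := mu_spec c k 2
  have h3 := mu_spec c k 3
  have h4 := mu_spec c k 4
  have h5 := mu_spec c k 5
  have h6 := mu_spec c k 6
  simp only [Fin.reduceCastSucc, Fin.reduceSucc] at h0 h1 h2 h3 h4 h5 h6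
  have ht : (∑ j : Fin 7, (((j : ℕ) : ℚ) + 1) * (mu c k j : ℚ)) =
      mu c k 0 + 2 * mu c k 1 + 3 * mu c k 2 + 4 * mu c k 3 + 5 * mu c k 4 + 6 * mu c k 5 +
        7 * mu c k 6 := by
    rw [Fin.sum_univ_seven]; simp; norm_num
  funext i
  simp only [Pi.add_apply, slWt, rhoA, qv, ht]
  fin_cases i <;> simp [p0, p1, p2, p3, p4, p5, p6, p7] <;> linarith

theorem mu_inj (c : Bool) : Function.Injective (mu c) := by
  intro k k' h
  have h1 := slWt_mu c k
  rw [h, slWt_mu c k'] at h1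
  have h2 := N_inj (qv_inj h1)
  exact ((Prod.ext_iff.1 h2).2).symm

def prs : Finset (Fin 8 × Fin 8) :=
  Finset.univ.filter (fun p : Fin 8 × Fin 8 => (p.1 : ℕ) < (p.2 : ℕ))

theorem dim_int (c : Bool) : ∑ k : Fin 36, ∏ p ∈ prs, (N (c, k) p.1 - N (c, k) p.2) =
    2 ^ 34 * ∏ p ∈ prs, (4 * (((p.2 : ℕ) : ℤ) - ((p.1 : ℕ) : ℤ))) := by
  revert c; decide +kernel

theorem dim_mu (c : Bool) (k : Fin 36) : dimA 7 (mu c k) =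
    ((∏ p ∈ prs, (N (c, k) p.1 - N (c, k) p.2) : ℤ) : ℚ) /
      ((∏ p ∈ prs, (4 * (((p.2 : ℕ) : ℤ) - ((p.1 : ℕ) : ℤ))) : ℤ) : ℚ) := by
  rw [dimA]
  push_cast
  rw [← Finset.prod_div_distrib]
  change ∏ p ∈ prs, _ = _
  refine Finset.prod_congr rfl fun p _ => ?_
  have h1 := congrFun (slWt_mu c k) p.1
  have h2 := congrFun (slWt_mu c k) p.2
  simp only [Pi.add_apply, slWt, rhoA, qv] at h1 h2
  have h3 : (N (c, k) p.1 : ℚ) - N (c, k) p.2 = 4 * (partLift 7 (mu c k) p.1 -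
      partLift 7 (mu c k) p.2 + ((p.2 : ℕ) : ℚ) - ((p.1 : ℕ) : ℚ)) := by
    linarith
  rw [h3, mul_div_mul_left _ _ (by norm_num)]

theorem dim_sum (c : Bool) : ∑ k : Fin 36, dimA 7 (mu c k) = 2 ^ 34 := by
  simp only [dim_mu]
  rw [← Finset.sum_div, ← Int.cast_sum, dim_int]
  rw [Int.cast_mul]
  have h : ((∏ p ∈ prs, (4 * (((p.2 : ℕ) : ℤ) - ((p.1 : ℕ) : ℤ))) : ℤ) : ℚ) ≠ 0 := by
    rw [Int.cast_ne_zero, Finset.prod_ne_zero_iff]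
    intro p hp
    rw [prs, Finset.mem_filter] at hp
    have := hp.2
    omega
  rw [mul_div_cancel_right₀ _ h]
  norm_num

theorem final_gen {w : Fin 35 → W8} (hw : WtSys CType.D 35 7 (e 7 4) w) {f : CharRing 35}
    (hf : IsCharY CType.D 35 (e 35 35) f) : ∃ c : (Fin 7 → ℕ) →₀ ℕ,
          Decomp 7 (resChar w f) c ∧ (∀ μ, c μ ≤ 1) ∧
          c.support.card = 36 ∧
          (∑ μ ∈ c.support, dimA 7 μ) = 2 ^ 34 := by
  classical
  rw [spin_char hf]
  obtain ⟨c, hc⟩ := decomp_main hw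
  set S : Finset (Fin 7 → ℕ) := Finset.univ.image (mu c) with hS
  set φ : (Fin 7 → ℕ) →₀ ℕ := Finsupp.indicator S (fun _ _ => 1) with hφ
  have hv : ∀ μ, φ μ = if μ ∈ S then 1 else 0 := by
    intro μ; rw [hφ, Finsupp.indicator_apply]; split_ifs <;> rfl
  have hsupp : φ.support = S := by
    ext μ
    rw [Finsupp.mem_support_iff, hv]
    simp
  refine ⟨φ, ?_, ?_, ?_, ?_⟩
  · rw [Decomp, hc, Finsupp.sum, hsupp, hS, Finset.sum_image (fun a _ b _ h => mu_inj c h), SA]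
    refine Finset.sum_congr rfl fun k _ => ?_
    rw [hv, if_pos (Finset.mem_image_of_mem _ (Finset.mem_univ k)), slWt_mu]
    simp
  · intro μ
    rw [hv]; split_ifs <;> simp
  · rw [hsupp, hS, Finset.card_image_of_injective _ (mu_inj c), Finset.card_univ, Fintype.card_fin]
  · rw [hsupp, hS, Finset.sum_image (fun a _ b _ h => mu_inj c h), dim_sum]

end Spin

/-- **Lemma 10.2 (spin module for `A₇ < D₃₅`).**  Let `X = A₇` be embedded in
`Y = D₃₅ = SO₇₀` via the 70-dimensional irreducible representation `δ = ω₄`, and let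
`V = V_Y(λ₃₅)` be a half-spin module for `Y` (of dimension `2³⁴`).  Then `V↓X` is
multiplicity-free; more precisely, `V↓X` is the direct sum of exactly `36` pairwise
non-isomorphic irreducible `X`-modules, and in particular the sum of the dimensions
of these `36` irreducibles equals `2³⁴`. -/
theorem thm_spin_A7_D35 :
    IsMFRes CType.D 35 7 (e 7 4) (e 35 35) ∧
    (∀ w, WtSys CType.D 35 7 (e 7 4) w →
      ∀ f, IsCharY CType.D 35 (e 35 35) f →
        ∃ c : (Fin 7 → ℕ) →₀ ℕ,
          Decomp 7 (resChar w f) c ∧ (∀ μ, c μ ≤ 1) ∧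
          c.support.card = 36 ∧
          (∑ μ ∈ c.support, dimA 7 μ) = 2 ^ 34) := by
  refine ⟨?_, fun w hw f hf => Spin.final_gen hw hf⟩
  intro w hw f hf
  obtain ⟨c, h1, h2, -⟩ := Spin.final_gen hw hf
  exact ⟨c, h1, h2⟩
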